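/- arXiv:2203.08731 — 12 statements merged into one kernel-verified Lean document; each statement's English description precedes it below -/
import Mathlib

section
/- Let (U, d) be a finite metric space. The maximum linkage function mind is a maximum-submodular connectivity function: it is normalized (mind(∅) = 0), symmetric (mind(X) = mind(U \ X) for all X ⊆ U), and maximum-submodular (max(mind(X), mind(Y)) ≥ max(mind(X ∩ Y), mind(X ∪ Y)) for all X, Y ⊆ U). -/
/-! The value `mindOf d X` is the least `c ≥ 0` bounding `exp (-d x y)` over all pairs `(x, y)`
separated by `X` (`mindOf_le_iff`), so each claim reduces to one about separated pairs. A pair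
separated by `X ∩ Y` or by `X ∪ Y` is separated, in the same direction, by `X` or by `Y`, which
gives maximum-submodularity; complementation swaps the two entries of a separated pair, so
symmetry of `d` gives symmetry. -/

/-- The maximum linkage function of a distance function `d` on a finite universe `U`:
`mindOf d X = max { exp (−d x y) : x ∈ X, y ∈ Xᶜ }` for nontrivial `X`, and `0` otherwise. -/
noncomputable def mindOf {U : Type*} [Fintype U] [DecidableEq U]
    (d : U → U → ℝ) (X : Finset U) : ℝ :=
  if h : X.Nonempty ∧ (Xᶜ : Finset U).Nonempty then
    (X ×ˢ (Xᶜ : Finset U)).sup' (Finset.nonempty_product.mpr h)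
      (fun p => Real.exp (-d p.1 p.2))
  else 0

/-- Universal property of `mindOf`. The hypothesis `0 ≤ c` covers the value `0` at `∅` and the
whole universe, where no pair is separated. -/
theorem mindOf_le_iff {U : Type*} [Fintype U] [DecidableEq U] (d : U → U → ℝ) (X : Finset U)
    {c : ℝ} (hc : 0 ≤ c) :
    mindOf d X ≤ c ↔ ∀ x ∈ X, ∀ y ∉ X, Real.exp (-d x y) ≤ c := by
  unfold mindOf
  split_ifs with h
  · simp only [Finset.sup'_le_iff, Finset.mem_product, Finset.mem_compl, Prod.forall, and_imp]
    exact ⟨fun H x hx y hy => H x y hx hy, fun H x y hx hy => H x hx y hy⟩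
  · refine ⟨fun _ x hx y hy => ?_, fun _ => hc⟩
    exact absurd ⟨⟨x, hx⟩, ⟨y, Finset.mem_compl.mpr hy⟩⟩ h

theorem mindOf_nonneg {U : Type*} [Fintype U] [DecidableEq U] (d : U → U → ℝ) (X : Finset U) :
    0 ≤ mindOf d X := by
  by_cases h : X.Nonempty ∧ (Xᶜ : Finset U).Nonempty
  · rw [mindOf, dif_pos h]
    obtain ⟨⟨x, hx⟩, ⟨y, hy⟩⟩ := h
    exact (Real.exp_pos _).le.trans (Finset.le_sup' (fun p : U × U => Real.exp (-d p.1 p.2))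
      (Finset.mem_product.mpr ⟨hx, hy⟩ : (x, y) ∈ X ×ˢ Xᶜ))
  · rw [mindOf, dif_neg h]

theorem exp_le_mindOf {U : Type*} [Fintype U] [DecidableEq U] (d : U → U → ℝ) {X : Finset U}
    {x y : U} (hx : x ∈ X) (hy : y ∉ X) : Real.exp (-d x y) ≤ mindOf d X :=
  (mindOf_le_iff d X (mindOf_nonneg d X)).mp le_rfl x hx y hy

theorem mindOf_compl_le {U : Type*} [Fintype U] [DecidableEq U] (d : U → U → ℝ)
    (hd : ∀ x y, d x y = d y x) (X : Finset U) : mindOf d Xᶜ ≤ mindOf d X := by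
  refine (mindOf_le_iff d _ (mindOf_nonneg d X)).mpr fun x hx y hy => ?_
  rw [hd]
  exact exp_le_mindOf d (by simpa using hy) (by simpa using hx)

/-- The maximum linkage function of a finite metric space is a maximum-submodular
connectivity function: it is normalized, symmetric, and maximum-submodular. -/
theorem mind_is_maxSubmodular_connectivity
    {U : Type*} [Fintype U] [DecidableEq U] [MetricSpace U] :
    mindOf (fun x y : U => dist x y) (∅ : Finset U) = 0 ∧
    (∀ X : Finset U, mindOf (fun x y : U => dist x y) X
        = mindOf (fun x y : U => dist x y) Xᶜ) ∧
    (∀ X Y : Finset U,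
      max (mindOf (fun x y : U => dist x y) (X ∩ Y))
          (mindOf (fun x y : U => dist x y) (X ∪ Y))
        ≤ max (mindOf (fun x y : U => dist x y) X)
            (mindOf (fun x y : U => dist x y) Y)) := by
  refine ⟨by simp [mindOf], fun X => le_antisymm ?_ ?_, fun X Y => ?_⟩
  · simpa using mindOf_compl_le (fun x y : U => dist x y) dist_comm Xᶜ
  · exact mindOf_compl_le _ dist_comm X
  · have hc := (mindOf_nonneg (fun x y : U => dist x y) X).trans
      (le_max_left _ (mindOf (fun x y : U => dist x y) Y))
    refine max_le ((mindOf_le_iff _ _ hc).mpr fun x hx y hy => ?_)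
      ((mindOf_le_iff _ _ hc).mpr fun x hx y hy => ?_)
    · rw [Finset.mem_inter] at hx hy
      by_cases hyX : y ∈ X
      · exact le_max_of_le_right
          (exp_le_mindOf (fun x y : U => dist x y) hx.2 fun hyY => hy ⟨hyX, hyY⟩)
      · exact le_max_of_le_left (exp_le_mindOf (fun x y : U => dist x y) hx.1 hyX)
    · rw [Finset.mem_union] at hx hy
      rcases hx with hx | hx
      · exact le_max_of_le_left
          (exp_le_mindOf (fun x y : U => dist x y) hx fun h => hy (Or.inl h))
      · exact le_max_of_le_right
          (exp_le_mindOf (fun x y : U => dist x y) hx fun h => hy (Or.inr h))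
end

section
/- For every real x > 1/2, let U = {−x−1, −x, x, x+1} ⊆ ℝ with metric d(u, v) = |u − v|, and let X = {x, x+1} and Y = {−x, x}. Then mind(X) + mind(Y) < mind(X ∩ Y) + mind(X ∪ Y); in particular, the maximum linkage function is in general not submodular. -/
/-!
Points on the same side of the gap between `-x` and `x` are at distance `1`, while points on
opposite sides are at distance at least `2 * x > 1`. The set `{x, x + 1}` is exactly one side of
the gap, so its linkage is at most `exp (-2 * x) < exp (-1)`. The set `{-x, x}` separates each of
its points from a neighbour at distance `1`, so its linkage is at most `exp (-1)`. Both the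
intersection `{x}` and the union `{-x, x, x + 1}` split a pair at distance `1`, so their linkages
are at least `exp (-1)`. Only these one-sided bounds (`mindRel_le`, `le_mindRel`) are needed.
-/

/-- The maximum linkage function on a finite universe `V ⊆ ℝ` with distance `d`:
`mindRel V d X = max { exp (−d x y) : x ∈ X, y ∈ V \ X }` for `X` with both `X` and
`V \ X` nonempty, and `0` otherwise. -/
noncomputable def mindRel (V : Finset ℝ) (d : ℝ → ℝ → ℝ) (X : Finset ℝ) : ℝ :=
  if h : X.Nonempty ∧ (V \ X).Nonempty then
    (X ×ˢ (V \ X)).sup' (Finset.nonempty_product.mpr h)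
      (fun p => Real.exp (-d p.1 p.2))
  else 0

theorem le_mindRel {V X : Finset ℝ} {d : ℝ → ℝ → ℝ} {a b : ℝ} (ha : a ∈ X) (hb : b ∈ V)
    (hbX : b ∉ X) : Real.exp (-d a b) ≤ mindRel V d X := by
  have hb' : b ∈ V \ X := Finset.mem_sdiff.mpr ⟨hb, hbX⟩
  have h : X.Nonempty ∧ (V \ X).Nonempty := ⟨⟨a, ha⟩, ⟨b, hb'⟩⟩
  rw [mindRel, dif_pos h]
  exact Finset.le_sup' (fun p : ℝ × ℝ => Real.exp (-d p.1 p.2))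
    (Finset.mk_mem_product ha hb')

theorem mindRel_le {V X : Finset ℝ} {d : ℝ → ℝ → ℝ} {r : ℝ}
    (h : ∀ a ∈ X, ∀ b ∈ V, b ∉ X → r ≤ d a b) : mindRel V d X ≤ Real.exp (-r) := by
  unfold mindRel
  split_ifs
  · refine Finset.sup'_le _ _ fun p hp => ?_
    obtain ⟨hp1, hp2⟩ := Finset.mem_product.mp hp
    obtain ⟨hV, hX⟩ := Finset.mem_sdiff.mp hp2
    exact Real.exp_le_exp.mpr (neg_le_neg (h _ hp1 _ hV hX))
  · exact (Real.exp_pos _).le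

/-- For every `x > 1/2`, on the universe `U = {−x−1, −x, x, x+1} ⊆ ℝ` with the metric
`d u v = |u − v|`, the sets `X = {x, x+1}` and `Y = {−x, x}` witness that the maximum
linkage function is not submodular. -/
theorem mind_not_submodular (x : ℝ) (hx : 1 / 2 < x) :
    mindRel {-x - 1, -x, x, x + 1} (fun u v => |u - v|) {x, x + 1}
      + mindRel {-x - 1, -x, x, x + 1} (fun u v => |u - v|) {-x, x}
    < mindRel {-x - 1, -x, x, x + 1} (fun u v => |u - v|) ({x, x + 1} ∩ {-x, x})
      + mindRel {-x - 1, -x, x, x + 1} (fun u v => |u - v|) ({x, x + 1} ∪ {-x, x}) := by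
  have hX : mindRel {-x - 1, -x, x, x + 1} (fun u v => |u - v|) {x, x + 1}
      ≤ Real.exp (-(2 * x)) := by
    refine mindRel_le fun a ha b hb hbX => le_abs.mpr ?_
    simp only [Finset.mem_insert, Finset.mem_singleton, not_or] at ha hb hbX
    grind
  have hY : mindRel {-x - 1, -x, x, x + 1} (fun u v => |u - v|) {-x, x}
      ≤ Real.exp (-1) := by
    refine mindRel_le fun a ha b hb hbY => le_abs.mpr ?_
    simp only [Finset.mem_insert, Finset.mem_singleton, not_or] at ha hb hbY
    grind
  have hI : Real.exp (-1) ≤ mindRel {-x - 1, -x, x, x + 1} (fun u v => |u - v|)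
      ({x, x + 1} ∩ {-x, x}) := by
    have h := le_mindRel (V := {-x - 1, -x, x, x + 1}) (X := {x, x + 1} ∩ {-x, x})
      (d := fun u v => |u - v|) (a := x) (b := x + 1) (by simp) (by simp) (by
        simp only [Finset.mem_inter, Finset.mem_insert, Finset.mem_singleton]
        grind)
    simpa using h
  have hU : Real.exp (-1) ≤ mindRel {-x - 1, -x, x, x + 1} (fun u v => |u - v|)
      ({x, x + 1} ∪ {-x, x}) := by
    have h := le_mindRel (V := {-x - 1, -x, x, x + 1}) (X := {x, x + 1} ∪ {-x, x})
      (d := fun u v => |u - v|) (a := -x) (b := -x - 1) (by simp) (by simp) (by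
        simp only [Finset.mem_union, Finset.mem_insert, Finset.mem_singleton]
        grind)
    have e : |-x - (-x - 1)| = 1 := by
      rw [sub_sub_cancel, abs_one]
    simpa only [e] using h
  have hlt : Real.exp (-(2 * x)) < Real.exp (-1) := Real.exp_lt_exp.mpr (by linarith)
  linarith
end

section
/- Let κ be a maximum-submodular connectivity function on a finite set U with at least two elements, and let 𝒯 be a κ-tangle of order k > 0. Then there exist distinct points u, v ∈ U such that u, v ∈ X for every X ∈ 𝒯, and moreover every X ⊆ U with u ∈ X and v ∉ X satisfies κ(X) ≥ k. In particular, if κ is the maximum linkage function mind of a metric d on U, then exp(−d(u, v)) ≥ k. -/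
/-!
Maximum-submodularity, symmetry and `κ ∅ = 0 < k` make the sets of `κ`-value below `k` a
Boolean algebra of subsets of `U`. The tangle axioms then make `T` an ultrafilter on this finite
algebra, so `T` has a least member `M` (`IsTangle.exists_least`), which is neither empty nor a
singleton. Any two distinct points of `M` lie in every member of `T`, and a set separating them
can neither belong to `T` nor have its complement in `T`, so its `κ`-value is at least `k`.

If `κ` is the maximum linkage function, the two points have to be chosen with care, since
distinct points of `M` may be far apart. Fix `u ∈ M`. The singleton `{u}` separates two points of
`M`, so some `w ≠ u` satisfies `k ≤ exp (-dist u w)`; as `κ M < k`, this `w` cannot lie outside `M`.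
-/

/-- A `κ`-tangle of order `k` on the finite universe `U`. -/
def IsTangle {U : Type*} [Fintype U] [DecidableEq U]
    (κ : Finset U → ℝ) (k : ℝ) (T : Set (Finset U)) : Prop :=
  0 ≤ k ∧
  (∀ X ∈ T, κ X < k) ∧
  (∀ X : Finset U, κ X < k → X ∈ T ∨ Xᶜ ∈ T) ∧
  (∀ X₁ ∈ T, ∀ X₂ ∈ T, ∀ X₃ ∈ T, (X₁ ∩ X₂ ∩ X₃ : Finset U).Nonempty) ∧
  (∀ x : U, ({x} : Finset U) ∉ T)

/-- In a maximum-submodular connectivity function, a tangle of positive order is closed under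
binary intersections and nonempty, so its minimal member is its least member. -/
theorem IsTangle.exists_least {U : Type*} [Fintype U] [DecidableEq U]
    {κ : Finset U → ℝ} {k : ℝ} {T : Set (Finset U)} (hnorm : κ ∅ = 0)
    (hmax : ∀ X Y : Finset U, max (κ (X ∩ Y)) (κ (X ∪ Y)) ≤ max (κ X) (κ Y))
    (hk : 0 < k) (hT : IsTangle κ k T) : ∃ M ∈ T, ∀ X ∈ T, M ⊆ X := by
  obtain ⟨-, h0, h1, h2, -⟩ := hT
  have hne : T.Nonempty := by
    rcases h1 ∅ (by rw [hnorm]; exact hk) with h | h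
    exacts [⟨_, h⟩, ⟨_, h⟩]
  have hinter : ∀ X ∈ T, ∀ Y ∈ T, X ∩ Y ∈ T := by
    intro X hX Y hY
    have hlt : κ (X ∩ Y) < k :=
      ((le_max_left _ _).trans (hmax X Y)).trans_lt (max_lt (h0 X hX) (h0 Y hY))
    refine (h1 _ hlt).resolve_right fun hc => ?_
    have h := h2 X hX Y hY _ hc
    rw [Finset.inter_compl] at h
    exact Finset.not_nonempty_empty h
  obtain ⟨M, hM⟩ := T.toFinite.exists_minimal hne
  refine ⟨M, hM.prop, fun X hX => ?_⟩
  exact (hM.le_of_le (hinter M hM.prop X hX) Finset.inter_subset_left).trans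
    Finset.inter_subset_right

/-- A positive lower bound on the maximum linkage of `X` is witnessed by a pair across `X`:
positivity excludes `X = ∅` and `X = U`, where the value is `0`. -/
theorem exists_le_exp_of_le_mindOf {U : Type*} [Fintype U] [DecidableEq U] (d : U → U → ℝ)
    {X : Finset U} {k : ℝ} (hk : 0 < k) (h : k ≤ mindOf d X) :
    ∃ x ∈ X, ∃ y ∉ X, k ≤ Real.exp (-d x y) := by
  unfold mindOf at h
  split_ifs at h with hX
  · obtain ⟨p, hp, hle⟩ := (Finset.le_sup'_iff _).mp h
    obtain ⟨h1, h2⟩ := Finset.mem_product.mp hp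
    exact ⟨p.1, h1, p.2, Finset.mem_compl.mp h2, hle⟩
  · exact absurd h (not_le.mpr hk)

/-- Every tangle of a maximum-submodular connectivity function `κ` of order `k > 0` is
pinned by two distinct points `u, v` contained in all its members, every set separating
`u` from `v` has `κ`-value at least `k`, and if `κ` is the maximum linkage function of the
metric then `exp (−d(u,v)) ≥ k`. -/
theorem tangle_of_maxSubmodular {U : Type*} [Fintype U] [DecidableEq U] [MetricSpace U]
    (κ : Finset U → ℝ)
    (hnorm : κ (∅ : Finset U) = 0)
    (hsym : ∀ X : Finset U, κ X = κ Xᶜ)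
    (hmax : ∀ X Y : Finset U, max (κ (X ∩ Y)) (κ (X ∪ Y)) ≤ max (κ X) (κ Y))
    (hcard : 1 < Fintype.card U)
    (k : ℝ) (hk : 0 < k) (T : Set (Finset U)) (hT : IsTangle κ k T) :
    ∃ u v : U, u ≠ v ∧ (∀ X ∈ T, u ∈ X ∧ v ∈ X) ∧
      (∀ X : Finset U, u ∈ X → v ∉ X → k ≤ κ X) ∧
      (κ = mindOf (fun x y : U => dist x y) → k ≤ Real.exp (-dist u v)) := by
  obtain ⟨M, hM, hleast⟩ := hT.exists_least hnorm hmax hk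
  obtain ⟨-, h0, h1, h2, h3⟩ := hT
  have hMne : M.Nonempty := by simpa using h2 M hM M hM M hM
  have hsep : ∀ u ∈ M, ∀ v ∈ M, ∀ X : Finset U, u ∈ X → v ∉ X → k ≤ κ X := by
    intro u hu v hv X huX hvX
    by_contra! hlt
    rcases h1 X hlt with h | h
    · exact hvX (hleast X h hv)
    · exact Finset.mem_compl.mp (hleast _ h hu) huX
  obtain ⟨u, hu⟩ := hMne
  obtain ⟨v, hv, hvu⟩ : ∃ v ∈ M, v ≠ u := by
    by_contra! hall
    exact h3 u (Finset.eq_singleton_iff_unique_mem.mpr ⟨hu, hall⟩ ▸ hM)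
  by_cases hκ : κ = mindOf (fun x y : U => dist x y)
  · have hle : k ≤ κ {u} :=
      hsep u hu v hv {u} (Finset.mem_singleton_self u) (by simpa using hvu)
    rw [hκ] at hle
    obtain ⟨x, hx, w, hw, hkw⟩ := exists_le_exp_of_le_mindOf _ hk hle
    obtain rfl := Finset.mem_singleton.mp hx
    have hwM : w ∈ M := by
      by_contra hwM
      have hcross := exp_le_mindOf (fun x y : U => dist x y) hu hwM
      rw [← hκ] at hcross
      exact absurd (h0 M hM) (not_lt.mpr (hkw.trans hcross))
    exact ⟨x, w, fun h => hw (Finset.mem_singleton.mpr h.symm),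
      fun X hX => ⟨hleast X hX hu, hleast X hX hwM⟩, hsep x hu w hwM, fun _ => hkw⟩
  · exact ⟨u, v, hvu.symm, fun X hX => ⟨hleast X hX hu, hleast X hX hv⟩,
      hsep u hu v hv, fun h => absurd h hκ⟩
end

section
/- (Exactness Lemma) Let κ be a maximum-submodular connectivity function on a finite set U and let (T, γ) be a pre-decomposition of U. Then there is a mapping γ' from the directed edges of T to subsets of U such that (T, γ') is a decomposition of U (i.e. a pre-decomposition exact at all internal nodes) satisfying wid(T, γ') ≤ wid(T, γ) and γ'(ℓ) ⊆ γ(ℓ) for all leaves ℓ of T. -/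
/-!
The statement holds because every overlap can be repaired by shrinking sets in the direction away
from a fixed root, without ever looking back.

Let `w` be the width of `(T, γ)`. Symmetry and maximum-submodularity make `{X | κ X ≤ w}` closed
under complements, intersections and finite unions, and it contains `∅ = X ∩ Xᶜ` because
`κ ∅ ≤ max (κ X) (κ Xᶜ) = κ X` for every `X`. So any Boolean combination of the sets `γ (s, t)` has `κ`-value
at most `w`, and only the combinatorics of covering and disjointness matters.

Root the tree at an arbitrary vertex `r` and order the vertices. Going down from the root, the set
`D t` to be placed on the edge from a parent `s` to its child `t` is
`D s ∩ (γ (s, t) \ ⋃ γ (s, v))`, where `v` ranges over the children of `s` preceding `t` and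
`D r = U`; the reversed edge gets the complement. At an internal node `s` the edge to the parent carries
`(D s)ᶜ`, and the edges to the children partition `D s`: they are disjoint by construction, and they
cover it because `D s ⊆ γ (parent, s)` misses the old set `γ (s, parent)`, so the covering condition
for `γ` puts each point of `D s` into the old set of some child, hence into the new set of the first
such child. Downward sets only shrink, which gives the inclusion at the leaves; a leaf that happens
to be the root has a single child, and there nothing is removed.

`exists_downward_sets` constructs `D`, `exists_mem_newGamma` is the covering statement and
`disjoint_newGamma` the disjointness.
-/

/-- `v` is a leaf of the graph `G`: it has a unique neighbor. -/
def IsLeafV {V : Type*} (G : SimpleGraph V) (v : V) : Prop :=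
  ∃ u, G.neighborSet v = {u}

/-- `G` is a ternary tree-shaped graph: every vertex is a leaf (degree 1) or has exactly
three neighbors. -/
def Ternary {V : Type*} (G : SimpleGraph V) : Prop :=
  ∀ v : V, IsLeafV G v ∨
    ∃ u₁ u₂ u₃ : V, u₁ ≠ u₂ ∧ u₁ ≠ u₃ ∧ u₂ ≠ u₃ ∧ G.neighborSet v = {u₁, u₂, u₃}

/-- `(T, γ)` is a pre-decomposition of the finite universe `U`:
`γ (t, u) = U \ γ (u, t)` for all edges, and at every internal node the sets on the three
outgoing edges cover `U`. -/
def IsPreDecomp {V U : Type*} [Fintype U] [DecidableEq U]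
    (G : SimpleGraph V) (γ : V → V → Finset U) : Prop :=
  (∀ s t : V, G.Adj s t → γ s t = (γ t s)ᶜ) ∧
  (∀ s u₁ u₂ u₃ : V, G.Adj s u₁ → G.Adj s u₂ → G.Adj s u₃ →
    u₁ ≠ u₂ → u₁ ≠ u₃ → u₂ ≠ u₃ → γ s u₁ ∪ γ s u₂ ∪ γ s u₃ = Finset.univ)

/-- The pre-decomposition `(T, γ)` is exact at every internal node: the sets on the
outgoing edges at each node are mutually disjoint. -/
def IsExact {V U : Type*} [Fintype U] [DecidableEq U]
    (G : SimpleGraph V) (γ : V → V → Finset U) : Prop :=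
  ∀ s t₁ t₂ : V, G.Adj s t₁ → G.Adj s t₂ → t₁ ≠ t₂ → Disjoint (γ s t₁) (γ s t₂)

/-- The width of a pre-decomposition: the maximum of `κ (γ (s, t))` over directed edges. -/
noncomputable def widthOf {V U : Type*} [Fintype U] [DecidableEq U]
    (κ : Finset U → ℝ) (G : SimpleGraph V) (γ : V → V → Finset U) : ℝ :=
  sSup {r : ℝ | ∃ s t : V, G.Adj s t ∧ r = κ (γ s t)}

section RootedTree

variable {V : Type*} {G : SimpleGraph V}

lemma tree_exists_parent (hG : G.IsTree) (r v : V) (hv : v ≠ r) :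
    ∃ p, G.Adj p v ∧ G.dist r v = G.dist r p + 1 := by
  obtain ⟨p, hp⟩ := hG.connected.exists_walk_length_eq_dist v r
  cases p with
  | nil => exact absurd rfl hv
  | @cons _ a _ h q =>
    refine ⟨a, h.symm, ?_⟩
    have h1 := G.dist_le q
    have h2 := hG.dist_eq_dist_add_one_of_adj r h
    rw [SimpleGraph.Walk.length_cons] at hp
    rw [SimpleGraph.dist_comm] at hp h1
    omega

/-- Prolonging geodesics from the root to two parents of `v` gives two paths from the root to `v`,
which coincide in a tree. -/
lemma tree_parent_unique (hG : G.IsTree) (r : V) {p q v : V} (hp : G.Adj p v) (hq : G.Adj q v)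
    (hdp : G.dist r v = G.dist r p + 1) (hdq : G.dist r v = G.dist r q + 1) : p = q := by
  obtain ⟨P, hP⟩ := hG.connected.exists_walk_length_eq_dist r p
  obtain ⟨Q, hQ⟩ := hG.connected.exists_walk_length_eq_dist r q
  have hP' : (P.concat hp).IsPath := SimpleGraph.Walk.isPath_of_length_eq_dist _ (by simp [*])
  have hQ' : (Q.concat hq).IsPath := SimpleGraph.Walk.isPath_of_length_eq_dist _ (by simp; omega)
  have h := (hG.existsUnique_path r v).unique hP' hQ'
  simpa using congrArg SimpleGraph.Walk.penultimate h

end RootedTree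

section Construction

variable {V U : Type*} {G : SimpleGraph V}

open Classical in
/-- The part of `γ (s, t)` outside all sets `γ (s, v)` for children `v` of `s` preceding `t`. The
tree is rooted at `r`, the children of `s` are its neighbors at larger distance from `r`, and `e`
numbers the vertices. -/
noncomputable def firstPart [Fintype V] [DecidableEq U] (G : SimpleGraph V) (r : V) (e : V → ℕ)
    (γ : V → V → Finset U) (s t : V) : Finset U :=
  γ s t \ (Finset.univ.filter
    (fun v => G.Adj s v ∧ G.dist r v = G.dist r s + 1 ∧ e v < e t)).sup (γ s)

lemma mem_firstPart [Fintype V] [DecidableEq U] {r : V} {e : V → ℕ} {γ : V → V → Finset U}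
    {s t : V} {x : U} :
    x ∈ firstPart G r e γ s t ↔
      x ∈ γ s t ∧ ∀ v, G.Adj s v → G.dist r v = G.dist r s + 1 → e v < e t → x ∉ γ s v := by
  simp [firstPart, Finset.mem_sup]

/-- The sets `D t` on the edges leading from a parent to its child `t`, given by recursion along the
path from the root. -/
lemma exists_downward_sets [Fintype U] [DecidableEq U] (hG : G.IsTree) (r : V)
    (E : V → V → Finset U) :
    ∃ D : V → Finset U, D r = Finset.univ ∧
      ∀ s t, G.Adj s t → G.dist r t = G.dist r s + 1 → D t = D s ∩ E s t := by
  have hpar : ∀ v, ∃ p, v ≠ r → G.Adj p v ∧ G.dist r v = G.dist r p + 1 := by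
    intro v
    by_cases hv : v = r
    · exact ⟨v, fun h => absurd hv h⟩
    · obtain ⟨p, hp⟩ := tree_exists_parent hG r v hv
      exact ⟨p, fun _ => hp⟩
  choose par hpar using hpar
  -- The recursion runs over the depth of the vertex.
  let F : ℕ → V → Finset U := fun n => Nat.rec (fun _ => Finset.univ)
    (fun _ f v => f (par v) ∩ E (par v) v) n
  refine ⟨fun v => F (G.dist r v) v, by simp [F], fun s t hst hd => ?_⟩
  have htr : t ≠ r := by
    rintro rfl
    simp at hd
  have hp : par t = s :=
    tree_parent_unique hG r (hpar t htr).1 hst (hpar t htr).2 hd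
  simp only [hd]
  change F (G.dist r s) (par t) ∩ E (par t) t = _
  rw [hp]

/-- The new set on a directed edge: `D t` on an edge leading down to `t`, and `(D s)ᶜ` on an edge
leading up from `s`. -/
noncomputable def newGamma [Fintype U] [DecidableEq U] (G : SimpleGraph V) (r : V) (D : V → Finset U)
    (s t : V) : Finset U :=
  if G.dist r t = G.dist r s + 1 then D t else (D s)ᶜ

variable {r : V} {e : V → ℕ} {γ : V → V → Finset U} {D : V → Finset U}

lemma newGamma_down [Fintype U] [DecidableEq U] {s t : V} (h : G.dist r t = G.dist r s + 1) :
    newGamma G r D s t = D t :=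
  if_pos h

lemma newGamma_up [Fintype U] [DecidableEq U] {s t : V} (h : G.dist r s = G.dist r t + 1) :
    newGamma G r D s t = (D s)ᶜ :=
  if_neg (by omega)

/-- A point covered by the old sets at `s` is covered by the new ones: outside `D s` it lies on the
edge to the parent, inside `D s` on the edge to the first child whose old set contains it. -/
lemma exists_mem_newGamma [Fintype V] [Fintype U] [DecidableEq U] (hG : G.IsTree)
    (hDr : D r = Finset.univ)
    (hD : ∀ s t, G.Adj s t → G.dist r t = G.dist r s + 1 → D t = D s ∩ firstPart G r e γ s t)
    (hcompl : ∀ s t : V, G.Adj s t → γ s t = (γ t s)ᶜ)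
    {s : V} {x : U} (hx : ∃ t, G.Adj s t ∧ x ∈ γ s t) :
    ∃ t, G.Adj s t ∧ x ∈ newGamma G r D s t := by
  classical
  by_cases hxs : x ∈ D s
  · obtain ⟨t, hst, hxt⟩ := hx
    have hchild : G.dist r t = G.dist r s + 1 := by
      rcases hG.dist_eq_dist_add_one_of_adj r hst with h | h
      · rw [hD t s hst.symm h, Finset.mem_inter, mem_firstPart] at hxs
        rw [hcompl s t hst, Finset.mem_compl] at hxt
        exact absurd hxs.2.1 hxt
      · exact h
    obtain ⟨u, hu, hmin⟩ := Finset.exists_min_image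
      (Finset.univ.filter fun v => G.Adj s v ∧ G.dist r v = G.dist r s + 1 ∧ x ∈ γ s v) e
      ⟨t, by simp [hst, hchild, hxt]⟩
    simp only [Finset.mem_filter, Finset.mem_univ, true_and] at hu hmin
    refine ⟨u, hu.1, ?_⟩
    rw [newGamma_down hu.2.1, hD s u hu.1 hu.2.1, Finset.mem_inter, mem_firstPart]
    exact ⟨hxs, hu.2.2, fun v hv hdv hlt hxv => absurd (hmin v ⟨hv, hdv, hxv⟩) (by omega)⟩
  · have hsr : s ≠ r := by
      rintro rfl
      simp [hDr] at hxs
    obtain ⟨p, hp, hd⟩ := tree_exists_parent hG r s hsr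
    exact ⟨p, hp.symm, by rw [newGamma_up hd]; simpa using hxs⟩

lemma disjoint_newGamma [Fintype V] [Fintype U] [DecidableEq U] (hG : G.IsTree)
    (he : Function.Injective e)
    (hD : ∀ s t, G.Adj s t → G.dist r t = G.dist r s + 1 → D t = D s ∩ firstPart G r e γ s t)
    {s t₁ t₂ : V} (h₁ : G.Adj s t₁) (h₂ : G.Adj s t₂) (hne : t₁ ≠ t₂) :
    Disjoint (newGamma G r D s t₁) (newGamma G r D s t₂) := by
  rw [Finset.disjoint_left]
  intro x hx₁ hx₂
  rcases hG.dist_eq_dist_add_one_of_adj r h₁ with d₁ | d₁ <;>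
    rcases hG.dist_eq_dist_add_one_of_adj r h₂ with d₂ | d₂
  · exact hne (tree_parent_unique hG r h₁.symm h₂.symm d₁ d₂)
  · rw [newGamma_up d₁, Finset.mem_compl] at hx₁
    rw [newGamma_down d₂, hD s t₂ h₂ d₂, Finset.mem_inter] at hx₂
    exact hx₁ hx₂.1
  · rw [newGamma_up d₂, Finset.mem_compl] at hx₂
    rw [newGamma_down d₁, hD s t₁ h₁ d₁, Finset.mem_inter] at hx₁
    exact hx₂ hx₁.1
  · rw [newGamma_down d₁, hD s t₁ h₁ d₁, Finset.mem_inter, mem_firstPart] at hx₁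
    rw [newGamma_down d₂, hD s t₂ h₂ d₂, Finset.mem_inter, mem_firstPart] at hx₂
    rcases lt_or_gt_of_ne (he.ne hne) with hlt | hlt
    · exact hx₂.2.2 t₁ h₁ d₁ hlt hx₁.2.1
    · exact hx₁.2.2 t₂ h₂ d₂ hlt hx₂.2.1

/-- A bound on `κ` on the old sets carries over to the new ones, by closure of
`{X | κ X ≤ w}` under Boolean operations. -/
lemma newGamma_le [Fintype V] [Fintype U] [DecidableEq U] (hG : G.IsTree)
    {κ : Finset U → ℝ} (hsym : ∀ X : Finset U, κ X = κ Xᶜ)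
    (hmax : ∀ X Y : Finset U, max (κ (X ∩ Y)) (κ (X ∪ Y)) ≤ max (κ X) (κ Y))
    (hDr : D r = Finset.univ)
    (hD : ∀ s t, G.Adj s t → G.dist r t = G.dist r s + 1 → D t = D s ∩ firstPart G r e γ s t)
    {w : ℝ} (hw : ∀ s t, G.Adj s t → κ (γ s t) ≤ w) {s t : V} (hst : G.Adj s t) :
    κ (newGamma G r D s t) ≤ w := by
  classical
  have hcompl : ∀ X, κ X ≤ w → κ Xᶜ ≤ w := fun X hX => (hsym X) ▸ hX
  have hinter : ∀ X Y, κ X ≤ w → κ Y ≤ w → κ (X ∩ Y) ≤ w := fun X Y hX hY =>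
    (le_max_left _ _).trans ((hmax X Y).trans (max_le hX hY))
  have hunion : ∀ X Y, κ X ≤ w → κ Y ≤ w → κ (X ∪ Y) ≤ w := fun X Y hX hY =>
    (le_max_right _ _).trans ((hmax X Y).trans (max_le hX hY))
  have hempty : κ (∅ : Finset U) ≤ w := by
    have h := hinter _ _ (hw s t hst) (hcompl _ (hw s t hst))
    rwa [Finset.inter_compl] at h
  have hfirst : ∀ a b, G.Adj a b → κ (firstPart G r e γ a b) ≤ w := by
    intro a b hab
    rw [firstPart, Finset.sdiff_eq_inter_compl]
    refine hinter _ _ (hw a b hab) (hcompl _ ?_)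
    refine Finset.sup_induction (p := fun X => κ X ≤ w) hempty
      (fun X hX Y hY => hunion X Y hX hY) (fun v hv => hw a v ?_)
    exact (Finset.mem_filter.1 hv).2.1
  have hDw : ∀ n v, G.dist r v = n → κ (D v) ≤ w := by
    intro n
    induction n with
    | zero =>
      intro v hv
      obtain rfl := hG.connected.dist_eq_zero_iff.1 hv
      rw [hDr, ← Finset.compl_empty]
      exact hcompl _ hempty
    | succ n ih =>
      intro v hv
      have hvr : v ≠ r := by
        rintro rfl
        simp at hv
      obtain ⟨p, hp, hd⟩ := tree_exists_parent hG r v hvr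
      rw [hD p v hp hd]
      exact hinter _ _ (ih p (by omega)) (hfirst p v hp)
  rcases hG.dist_eq_dist_add_one_of_adj r hst with d | d
  · rw [newGamma_up d]
    exact hcompl _ (hDw _ s rfl)
  · rw [newGamma_down d]
    exact hDw _ t rfl

/-- A leaf below its neighbor gets a subset of its old set; a leaf above its neighbor is the root,
has only one child, and keeps its old set. -/
lemma newGamma_leaf_subset [Fintype V] [Fintype U] [DecidableEq U] (hG : G.IsTree)
    (hDr : D r = Finset.univ)
    (hD : ∀ s t, G.Adj s t → G.dist r t = G.dist r s + 1 → D t = D s ∩ firstPart G r e γ s t)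
    (hcompl : ∀ s t : V, G.Adj s t → γ s t = (γ t s)ᶜ)
    {l s : V} (hl : IsLeafV G l) (hsl : G.Adj s l) :
    newGamma G r D s l ⊆ γ s l := by
  intro x hx
  rcases hG.dist_eq_dist_add_one_of_adj r hsl with d | d
  · obtain ⟨u, hu⟩ := hl
    have huniq : ∀ v, G.Adj l v → v = s := by
      intro v hv
      have hv' : v ∈ G.neighborSet l := hv
      have hs' : s ∈ G.neighborSet l := hsl.symm
      rw [hu, Set.mem_singleton_iff] at hv' hs'
      rw [hv', hs']
    have hlr : l = r := by
      by_contra hne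
      obtain ⟨p, hp, hd⟩ := tree_exists_parent hG r l hne
      rw [huniq p hp.symm] at hd
      omega
    rw [newGamma_up d, hD l s hsl.symm d, hlr, hDr, Finset.univ_inter, ← hlr,
      Finset.mem_compl, mem_firstPart] at hx
    rw [hcompl s l hsl, Finset.mem_compl]
    refine fun hxl => hx ⟨hxl, fun v hv _ hlt => ?_⟩
    rw [huniq v hv] at hlt
    exact absurd hlt (lt_irrefl _)
  · rw [newGamma_down d, hD s l hsl d, Finset.mem_inter, mem_firstPart] at hx
    exact hx.2.1

end Construction

/-- Exactness Lemma: every pre-decomposition for a maximum-submodular connectivity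
function can be turned into an exact decomposition of at most the same width, shrinking
the atoms at the leaves. -/
theorem exactness_lemma {V U : Type*} [Fintype V] [Fintype U] [DecidableEq U]
    (G : SimpleGraph V) (hG : G.IsTree) (hdeg : Ternary G)
    (κ : Finset U → ℝ)
    (hnorm : κ (∅ : Finset U) = 0)
    (hsym : ∀ X : Finset U, κ X = κ Xᶜ)
    (hmax : ∀ X Y : Finset U, max (κ (X ∩ Y)) (κ (X ∪ Y)) ≤ max (κ X) (κ Y))
    (γ : V → V → Finset U) (hγ : IsPreDecomp G γ) :
    ∃ γ' : V → V → Finset U, IsPreDecomp G γ' ∧ IsExact G γ' ∧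
      widthOf κ G γ' ≤ widthOf κ G γ ∧
      (∀ ℓ s : V, IsLeafV G ℓ → G.Adj s ℓ → γ' s ℓ ⊆ γ s ℓ) := by
  obtain ⟨hcompl, hcover⟩ := hγ
  obtain ⟨r⟩ := hG.connected.nonempty
  obtain ⟨e, he⟩ : ∃ e : V → ℕ, Function.Injective e :=
    ⟨fun v => (Fintype.equivFin V v : ℕ),
      fun a b h => (Fintype.equivFin V).injective (Fin.ext h)⟩
  obtain ⟨D, hDr, hD⟩ := exists_downward_sets hG r (firstPart G r e γ)
  refine ⟨newGamma G r D, ⟨?_, ?_⟩, ?_, ?_, ?_⟩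
  · intro s t hst
    rcases hG.dist_eq_dist_add_one_of_adj r hst with d | d
    · rw [newGamma_up d, newGamma_down d]
    · rw [newGamma_up d, newGamma_down d, compl_compl]
  · intro s u₁ u₂ u₃ h₁ h₂ h₃ h₁₂ h₁₃ h₂₃
    -- By ternarity, the three given neighbors are all the neighbors of `s`.
    have hall : ∀ v, G.Adj s v → v = u₁ ∨ v = u₂ ∨ v = u₃ := by
      intro v hv
      have hmem : ∀ v, G.Adj s v ↔ v ∈ G.neighborSet s := fun _ => Iff.rfl
      rw [hmem] at h₁ h₂ h₃ hv
      rcases hdeg s with ⟨u, hu⟩ | ⟨a, b, c, _, _, _, hu⟩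
      · rw [hu, Set.mem_singleton_iff] at h₁ h₂
        exact absurd (h₁.trans h₂.symm) h₁₂
      · simp only [hu, Set.mem_insert_iff, Set.mem_singleton_iff] at h₁ h₂ h₃ hv
        grind
    refine Finset.eq_univ_iff_forall.2 fun x => ?_
    have hx : ∃ t, G.Adj s t ∧ x ∈ γ s t := by
      have h := Finset.mem_univ x
      rw [← hcover s u₁ u₂ u₃ h₁ h₂ h₃ h₁₂ h₁₃ h₂₃, Finset.mem_union, Finset.mem_union] at h
      rcases h with (h | h) | h
      · exact ⟨u₁, h₁, h⟩
      · exact ⟨u₂, h₂, h⟩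
      · exact ⟨u₃, h₃, h⟩
    obtain ⟨t, hst, hxt⟩ := exists_mem_newGamma hG hDr hD hcompl hx
    rw [Finset.mem_union, Finset.mem_union]
    rcases hall t hst with rfl | rfl | rfl
    · exact Or.inl (Or.inl hxt)
    · exact Or.inl (Or.inr hxt)
    · exact Or.inr hxt
  · intro s t₁ t₂ h₁ h₂ hne
    exact disjoint_newGamma hG he hD h₁ h₂ hne
  · have hbdd : BddAbove {x : ℝ | ∃ s t : V, G.Adj s t ∧ x = κ (γ s t)} := by
      refine (Set.Finite.subset (Set.finite_range fun p : V × V => κ (γ p.1 p.2)) ?_).bddAbove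
      rintro x ⟨s, t, -, rfl⟩
      exact ⟨(s, t), rfl⟩
    have hw : ∀ s t, G.Adj s t → κ (γ s t) ≤ widthOf κ G γ :=
      fun s t hst => le_csSup hbdd ⟨s, t, hst, rfl⟩
    -- The supremum is over a nonempty set, since no vertex is isolated.
    have hadj : ∃ u, G.Adj r u := by
      rcases hdeg r with ⟨u, hu⟩ | ⟨u, _, _, _, _, _, hu⟩
      · exact ⟨u, (by simp [hu] : u ∈ G.neighborSet r)⟩
      · exact ⟨u, (by simp [hu] : u ∈ G.neighborSet r)⟩
    obtain ⟨u, hu⟩ := hadj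
    refine csSup_le ⟨_, r, u, hu, rfl⟩ ?_
    rintro x ⟨s, t, hst, rfl⟩
    exact newGamma_le hG hsym hmax hDr hD hw hst
  · intro l s hl hsl
    exact newGamma_leaf_subset hG hDr hD hcompl hl hsl
end

section
/- (Duality Theorem for Maximum-Submodular Functions) Let κ be a maximum-submodular connectivity function on a finite set U with at least two elements, and let 𝒜 ⊆ 2^U be closed under taking subsets and contain all singletons {x} for x ∈ U. Then for every real k > 0, there is a decomposition of U of width less than k over 𝒜 if and only if there is no κ-tangle of order k that avoids 𝒜. -/
/-! ### Orienting the edges of a tree -/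

/-- In a finite tree it is impossible to select an outgoing edge at every vertex so that no edge
is selected in both directions. -/
lemma no_total_orientation {n : ℕ} {G : SimpleGraph (Fin n)} (hG : G.IsTree)
    (P : Fin n → Fin n → Prop) (hex : ∀ s, ∃ t, G.Adj s t ∧ P s t)
    (hanti : ∀ s t, G.Adj s t → P s t → ¬ P t s) : False := by
  classical
  choose f hf hP using hex
  have hcard := (SimpleGraph.isTree_iff_connected_and_card.mp hG).2
  have hinj : Function.Injective (fun v => (⟨s(v, f v), hf v⟩ : G.edgeSet)) := by
    intro v w h
    have h' : s(v, f v) = s(w, f w) := congrArg Subtype.val h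
    rcases Sym2.eq_iff.mp h' with ⟨h1, -⟩ | ⟨h1, h2⟩
    · exact h1
    · have hv := hP v
      have hw := hP w
      rw [h2] at hv
      rw [← h1] at hw
      exact absurd hw (hanti v w (h2 ▸ hf v) hv)
  have hle : Nat.card (Fin n) ≤ Nat.card G.edgeSet := Nat.card_le_card_of_injective _ hinj
  rw [← hcard] at hle
  exact Nat.not_succ_le_self _ hle

/-! ### The caterpillar tree -/

/-- Parent function of the caterpillar rooted at `0`. The spine consists of `0` and the odd
numbers, and the leaf `2 * i + 2` hangs off the spine vertex `2 * i + 1`. Truncated subtraction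
makes `0` the parent of `1`. -/
def catParent (v : ℕ) : ℕ := if v % 2 = 0 then v - 1 else v - 2

/-- The caterpillar on the vertices `0, …, 2 * m + 1`: its leaves are `0`, the positive even
numbers and the last spine vertex `2 * m + 1`. -/
def catGraph (m : ℕ) : SimpleGraph (Fin (2 * m + 2)) where
  Adj s t := (0 < t.val ∧ s.val = catParent t) ∨ (0 < s.val ∧ t.val = catParent s)
  symm := ⟨fun _ _ h => h.symm⟩
  loopless := ⟨fun s h => by
    unfold catParent at h
    split_ifs at h <;> omega⟩

lemma catGraph_adj {m : ℕ} {s t : Fin (2 * m + 2)} : (catGraph m).Adj s t ↔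
    (0 < t.val ∧ s.val = catParent t) ∨ (0 < s.val ∧ t.val = catParent s) := Iff.rfl

lemma catParent_lt {v : ℕ} (hv : 0 < v) : catParent v < v := by
  unfold catParent
  split_ifs <;> omega

lemma catGraph_connected (m : ℕ) : (catGraph m).Connected := by
  have key : ∀ (j : ℕ) (hj : j < 2 * m + 2), (catGraph m).Reachable ⟨j, hj⟩ ⟨0, by omega⟩ := by
    intro j
    induction j using Nat.strong_induction_on with
    | _ j ih =>
      intro hj
      rcases Nat.eq_zero_or_pos j with rfl | hpos
      · exact SimpleGraph.Reachable.refl _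
      · have hlt := catParent_lt hpos
        refine SimpleGraph.Reachable.trans (SimpleGraph.Adj.reachable ?_)
          (ih (catParent j) hlt (by omega))
        exact Or.inr ⟨hpos, rfl⟩
  have : Nonempty (Fin (2 * m + 2)) := ⟨0⟩
  exact ⟨fun u v => (key u u.2).trans (key v v.2).symm⟩

lemma catGraph_isTree (m : ℕ) : (catGraph m).IsTree := by
  classical
  rw [SimpleGraph.isTree_iff_connected_and_card]
  refine ⟨catGraph_connected m, le_antisymm ?_ ?_⟩
  · -- Every edge joins some non-root vertex `v + 1` to its parent.
    let g : Fin (2 * m + 1) → (catGraph m).edgeSet := fun v =>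
      ⟨s(v.succ, ⟨catParent (v.val + 1),
        (catParent_lt (Nat.succ_pos _)).trans (Nat.succ_lt_succ v.2)⟩),
        Or.inr ⟨Nat.succ_pos _, rfl⟩⟩
    have hg : Function.Surjective g := by
      rintro ⟨e, he⟩
      induction e using Sym2.ind with
      | _ s t =>
        rw [SimpleGraph.mem_edgeSet, catGraph_adj] at he
        rcases he with ⟨h1, h2⟩ | ⟨h1, h2⟩
        · refine ⟨⟨t.val - 1, by omega⟩, Subtype.ext ?_⟩
          refine Sym2.eq_iff.mpr (Or.inr ⟨Fin.ext ?_, Fin.ext ?_⟩)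
          · simp only [Fin.val_succ]; omega
          · simp only [Nat.sub_add_cancel h1, h2]
        · refine ⟨⟨s.val - 1, by omega⟩, Subtype.ext ?_⟩
          refine Sym2.eq_iff.mpr (Or.inl ⟨Fin.ext ?_, Fin.ext ?_⟩)
          · simp only [Fin.val_succ]; omega
          · simp only [Nat.sub_add_cancel h1, h2]
    have := Nat.card_le_card_of_surjective g hg
    simp only [Nat.card_eq_fintype_card, Fintype.card_fin] at this ⊢
    omega
  · exact (catGraph_connected m).card_vert_le_card_edgeSet_add_one

/-- The neighbours of an odd vertex `2 * i + 1` are its parent `2 * i - 1` (truncated to `0` if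
`i = 0`) and, unless it is the last vertex, the leaf `2 * i + 2` and the next spine vertex
`2 * i + 3`. -/
lemma catGraph_adj_odd {m i : ℕ} {s t : Fin (2 * m + 2)} (hs : s.val = 2 * i + 1) :
    (catGraph m).Adj s t ↔ t.val = 2 * i - 1 ∨ t.val = 2 * i + 2 ∨ t.val = 2 * i + 3 := by
  rw [catGraph_adj, hs]
  unfold catParent
  split_ifs <;> omega

/-- Every vertex is an odd vertex other than the last one, or has exactly one neighbour: `1` for
the root `0`, the parent otherwise. -/
lemma catGraph_cases {m : ℕ} (s : Fin (2 * m + 2)) :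
    (∃ i < m, s.val = 2 * i + 1) ∨
    ((s.val = 0 ∨ s.val % 2 = 0 ∨ s.val = 2 * m + 1) ∧
      ∀ t, (catGraph m).Adj s t ↔ t.val = if s.val = 0 then 1 else catParent s) := by
  by_cases h : s.val = 0 ∨ s.val % 2 = 0 ∨ s.val = 2 * m + 1
  · refine Or.inr ⟨h, fun t => ?_⟩
    have := t.2
    rw [catGraph_adj]
    unfold catParent
    split_ifs <;> omega
  · have := s.2
    exact Or.inl ⟨s.val / 2, by omega, by omega⟩

lemma catGraph_ternary (m : ℕ) : Ternary (catGraph m) := by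
  intro s
  rcases catGraph_cases s with ⟨i, hi, hs⟩ | ⟨-, h⟩
  · right
    refine ⟨⟨2 * i - 1, by omega⟩, ⟨2 * i + 2, by omega⟩, ⟨2 * i + 3, by omega⟩, ?_, ?_, ?_, ?_⟩
    · simp only [ne_eq, Fin.mk.injEq]; omega
    · simp only [ne_eq, Fin.mk.injEq]; omega
    · simp only [ne_eq, Fin.mk.injEq]; omega
    · ext t
      simp only [SimpleGraph.mem_neighborSet, catGraph_adj_odd hs, Set.mem_insert_iff,
        Set.mem_singleton_iff, Fin.ext_iff]
  · left
    have hlt : (if s.val = 0 then 1 else catParent s) < 2 * m + 2 := by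
      split_ifs with h0
      · omega
      · exact (catParent_lt (Nat.pos_of_ne_zero h0)).trans s.2
    refine ⟨⟨_, hlt⟩, ?_⟩
    ext t
    simp only [SimpleGraph.mem_neighborSet, h, Set.mem_singleton_iff, Fin.ext_iff]

/-- The leaves are among `0`, the even vertices and the last vertex: every other vertex
`2 * i + 1` has the two children `2 * i + 2` and `2 * i + 3`. -/
lemma catGraph_leaf {m : ℕ} {s : Fin (2 * m + 2)} (hs : IsLeafV (catGraph m) s) :
    s.val = 0 ∨ s.val % 2 = 0 ∨ s.val = 2 * m + 1 := by
  rcases catGraph_cases s with ⟨i, hi, hs'⟩ | ⟨h, -⟩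
  · obtain ⟨u, hu⟩ := hs
    have h1 : (⟨2 * i + 2, by omega⟩ : Fin (2 * m + 2)) ∈ (catGraph m).neighborSet s :=
      (catGraph_adj_odd hs').mpr (Or.inr (Or.inl rfl))
    have h2 : (⟨2 * i + 3, by omega⟩ : Fin (2 * m + 2)) ∈ (catGraph m).neighborSet s :=
      (catGraph_adj_odd hs').mpr (Or.inr (Or.inr rfl))
    rw [hu, Set.mem_singleton_iff] at h1 h2
    have := Fin.ext_iff.mp (h1.trans h2.symm)
    simp only at this
    omega
  · exact h

/-! ### The decomposition along a chain of sets -/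

section Chain

variable {U : Type*} [Fintype U] [DecidableEq U]

/-- The part of `U` below the non-root vertex `v` of the caterpillar, for a chain `W`: the
difference `W (i + 1) \ W i` for the leaf `2 * i + 2`, and the complement of `W i` for the spine
vertex `2 * i + 1`. -/
def catBelow (W : ℕ → Finset U) (v : ℕ) : Finset U :=
  if v % 2 = 0 then W (v / 2) \ W (v / 2 - 1) else (W (v / 2))ᶜ

/-- The edge labelling of the caterpillar: `catBelow` on edges directed away from the root, its
complement on edges directed towards the root. -/
def catLabel (W : ℕ → Finset U) (s t : ℕ) : Finset U :=
  if 0 < t ∧ s = catParent t then catBelow W t else (catBelow W s)ᶜ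

lemma catLabel_down (W : ℕ → Finset U) {s t : ℕ} (ht : 0 < t) (h : s = catParent t) :
    catLabel W s t = catBelow W t := if_pos ⟨ht, h⟩

lemma catLabel_up (W : ℕ → Finset U) {s t : ℕ} (hs : 0 < s) (h : t = catParent s) :
    catLabel W s t = (catBelow W s)ᶜ := by
  refine if_neg fun ⟨ht, h'⟩ => ?_
  have h1 := catParent_lt hs
  have h2 := catParent_lt ht
  omega

/-- The labels leaving the spine vertex `2 * i + 1`. -/
lemma catLabel_odd (W : ℕ → Finset U) (i t : ℕ) :
    (t = 2 * i - 1 → catLabel W (2 * i + 1) t = W i) ∧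
    (t = 2 * i + 2 → catLabel W (2 * i + 1) t = W (i + 1) \ W i) ∧
    (t = 2 * i + 3 → catLabel W (2 * i + 1) t = (W (i + 1))ᶜ) := by
  refine ⟨?_, ?_, ?_⟩
  · rintro rfl
    rw [catLabel_up W (by omega) (by unfold catParent; split_ifs <;> omega), catBelow,
      if_neg (by omega), compl_compl]
    congr 1; omega
  · rintro rfl
    rw [catLabel_down W (by omega) (by unfold catParent; split_ifs <;> omega), catBelow,
      if_pos (by omega)]
    congr 2 <;> [skip; congr 1] <;> omega
  · rintro rfl
    rw [catLabel_down W (by omega) (by unfold catParent; split_ifs <;> omega), catBelow,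
      if_neg (by omega)]
    congr 2; omega

lemma catLabel_preDecomp (m : ℕ) (W : ℕ → Finset U) :
    IsPreDecomp (catGraph m) (fun s t => catLabel W s t) := by
  refine ⟨?_, ?_⟩
  · rintro s t (⟨h1, h2⟩ | ⟨h1, h2⟩)
    · simp only [catLabel_down W h1 h2, catLabel_up W h1 h2, compl_compl]
    · simp only [catLabel_down W h1 h2, catLabel_up W h1 h2]
  · intro s u₁ u₂ u₃ h₁ h₂ h₃ h12 h13 h23
    rw [Ne, Fin.ext_iff] at h12 h13 h23
    rcases catGraph_cases s with ⟨i, hi, hs⟩ | ⟨-, h⟩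
    · rw [catGraph_adj_odd hs] at h₁ h₂ h₃
      have ha : u₁.val = 2 * i - 1 ∨ u₂.val = 2 * i - 1 ∨ u₃.val = 2 * i - 1 := by
        clear hs hi; omega
      have hb : u₁.val = 2 * i + 2 ∨ u₂.val = 2 * i + 2 ∨ u₃.val = 2 * i + 2 := by
        clear hs hi ha; omega
      have hc : u₁.val = 2 * i + 3 ∨ u₂.val = 2 * i + 3 ∨ u₃.val = 2 * i + 3 := by
        clear hs hi ha hb; omega
      have hcov : ∀ (x : U) (c : ℕ), x ∈ catLabel W (2 * i + 1) c →
          (u₁.val = c ∨ u₂.val = c ∨ u₃.val = c) →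
          x ∈ catLabel W s u₁ ∪ catLabel W s u₂ ∪ catLabel W s u₃ := by
        intro x c hx hu
        rw [← hs] at hx
        simp only [Finset.mem_union]
        rcases hu with rfl | rfl | rfl
        · exact Or.inl (Or.inl hx)
        · exact Or.inl (Or.inr hx)
        · exact Or.inr hx
      refine Finset.eq_univ_of_forall fun x => ?_
      by_cases h0 : x ∈ W i
      · exact hcov x _ (by rwa [(catLabel_odd W i _).1 rfl]) ha
      by_cases h1 : x ∈ W (i + 1)
      · refine hcov x _ ?_ hb
        rw [(catLabel_odd W i _).2.1 rfl]
        exact Finset.mem_sdiff.mpr ⟨h1, h0⟩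
      · refine hcov x _ ?_ hc
        rw [(catLabel_odd W i _).2.2 rfl]
        exact Finset.mem_compl.mpr h1
    · rw [h] at h₁ h₂
      omega

lemma catLabel_exact (m : ℕ) (W : ℕ → Finset U) (hW : Monotone W) :
    IsExact (catGraph m) (fun s t => catLabel W s t) := by
  intro s u₁ u₂ h₁ h₂ h12
  rw [Ne, Fin.ext_iff] at h12
  rcases catGraph_cases s with ⟨i, hi, hs⟩ | ⟨-, h⟩
  · rw [catGraph_adj_odd hs] at h₁ h₂
    have hsub := hW (Nat.le_succ i)
    obtain ⟨a₁, b₁, c₁⟩ := catLabel_odd W i u₁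
    obtain ⟨a₂, b₂, c₂⟩ := catLabel_odd W i u₂
    simp only [hs]
    rw [Finset.disjoint_left]
    intro x
    have hx : x ∈ W i → x ∈ W (i + 1) := @hsub x
    rcases h₁ with h₁ | h₁ | h₁ <;> rcases h₂ with h₂ | h₂ | h₂ <;> try omega
    all_goals
      first | rw [a₁ h₁] | rw [b₁ h₁] | rw [c₁ h₁]
      first | rw [a₂ h₂] | rw [b₂ h₂] | rw [c₂ h₂]
      simp only [Finset.mem_sdiff, Finset.mem_compl]
      clear * - hx
      tauto
  · rw [h] at h₁ h₂
    omega

end Chain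

/-- Duality Theorem for Maximum-Submodular Functions: if `𝒜` is closed under subsets and
contains all singletons, then there is a decomposition of width `< k` over `𝒜` iff there
is no `κ`-tangle of order `k` avoiding `𝒜`. -/
theorem duality_maxSubmodular {U : Type*} [Fintype U] [DecidableEq U]
    (κ : Finset U → ℝ)
    (hnorm : κ (∅ : Finset U) = 0)
    (hsym : ∀ X : Finset U, κ X = κ Xᶜ)
    (hmax : ∀ X Y : Finset U, max (κ (X ∩ Y)) (κ (X ∪ Y)) ≤ max (κ X) (κ Y))
    (hcard : 1 < Fintype.card U)
    (𝒜 : Set (Finset U))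
    (hdown : ∀ X ∈ 𝒜, ∀ Y : Finset U, Y ⊆ X → Y ∈ 𝒜)
    (hsing : ∀ x : U, ({x} : Finset U) ∈ 𝒜)
    (k : ℝ) (hk : 0 < k) :
    (∃ (n : ℕ) (G : SimpleGraph (Fin n)) (γ : Fin n → Fin n → Finset U),
        G.IsTree ∧ Ternary G ∧ IsPreDecomp G γ ∧ IsExact G γ ∧
        (∀ s t : Fin n, G.Adj s t → κ (γ s t) < k) ∧
        (∀ ℓ s : Fin n, IsLeafV G ℓ → G.Adj s ℓ → γ s ℓ ∈ 𝒜))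
    ↔ ¬ ∃ T : Set (Finset U), IsTangle κ k T ∧ T ∩ 𝒜 = ∅ := by
  classical
  have hcompl : ∀ X, κ X < k → κ Xᶜ < k := fun X h => hsym X ▸ h
  have hunion : ∀ X Y, κ X < k → κ Y < k → κ (X ∪ Y) < k := fun X Y hX hY =>
    ((le_max_right _ _).trans (hmax X Y)).trans_lt (max_lt hX hY)
  have hinter : ∀ X Y, κ X < k → κ Y < k → κ (X ∩ Y) < k := fun X Y hX hY =>
    ((le_max_left _ _).trans (hmax X Y)).trans_lt (max_lt hX hY)
  constructor
  · rintro ⟨n, G, γ, hG, htern, ⟨hγ, hcov⟩, -, hwid, hat⟩ ⟨T, ⟨-, -, hT1, hT2, -⟩, hTA⟩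
    have hside : ∀ s t, G.Adj s t → γ s t ∉ T → γ t s ∈ T := by
      intro s t h hn
      rw [hγ t s h.symm]
      exact (hT1 _ (hwid s t h)).resolve_left hn
    refine no_total_orientation hG (fun s t => γ s t ∈ T) ?_ ?_
    · intro s
      rcases htern s with hleaf | ⟨u₁, u₂, u₃, h12, h13, h23, hN⟩
      · obtain ⟨u, hu⟩ := id hleaf
        have hadj : G.Adj s u := by
          rw [← SimpleGraph.mem_neighborSet, hu]; rfl
        refine ⟨u, hadj, hside u s hadj.symm fun hmem => ?_⟩
        exact (Set.eq_empty_iff_forall_notMem.mp hTA) _ ⟨hmem, hat s u hleaf hadj.symm⟩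
      · have hadj : ∀ u, u = u₁ ∨ u = u₂ ∨ u = u₃ → G.Adj s u := by
          intro u hu
          rw [← SimpleGraph.mem_neighborSet, hN]
          simpa using hu
        have a₁ := hadj u₁ (by simp)
        have a₂ := hadj u₂ (by simp)
        have a₃ := hadj u₃ (by simp)
        by_contra! hno
        obtain ⟨x, hx⟩ := hT2 _ (hside _ _ a₁ (hno _ a₁)) _ (hside _ _ a₂ (hno _ a₂)) _
          (hside _ _ a₃ (hno _ a₃))
        have hc := Finset.mem_univ x
        rw [← hcov s u₁ u₂ u₃ a₁ a₂ a₃ h12 h13 h23] at hc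
        rw [hγ _ _ a₁.symm, hγ _ _ a₂.symm, hγ _ _ a₃.symm] at hx
        simp only [Finset.mem_inter, Finset.mem_union, Finset.mem_compl] at hx hc
        tauto
    · intro s t h h1 h2
      rw [hγ t s h.symm] at h2
      obtain ⟨x, hx⟩ := hT2 _ h1 _ h2 _ h2
      simp at hx
  · intro hno
    -- The principal family at `x` is not a tangle avoiding `𝒜`, so it meets `𝒜`.
    have hpt : ∀ x : U, ∃ X : Finset U, κ X < k ∧ x ∈ X ∧ X ∈ 𝒜 := by
      intro x
      by_contra! hx
      refine hno ⟨{X | κ X < k ∧ x ∈ X}, ⟨hk.le, fun X h => h.1, ?_, ?_, ?_⟩, ?_⟩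
      · intro X hX
        by_cases h : x ∈ X
        · exact Or.inl ⟨hX, h⟩
        · exact Or.inr ⟨hcompl X hX, Finset.mem_compl.mpr h⟩
      · intro X₁ h₁ X₂ h₂ X₃ h₃
        exact ⟨x, by simp [h₁.2, h₂.2, h₃.2]⟩
      · intro y hy
        exact hx _ hy.1 hy.2 (hsing y)
      · exact Set.eq_empty_iff_forall_notMem.mpr fun X hX => hx X hX.1.1 hX.1.2 hX.2
    choose F hFκ hFmem hFA using hpt
    obtain ⟨x₀⟩ : Nonempty U := Fintype.card_pos_iff.mp (by omega)
    have hempty : (∅ : Finset U) ∈ 𝒜 := hdown _ (hsing x₀) _ (Finset.empty_subset _)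
    let e := Fintype.equivFin U
    let f : ℕ → Finset U := fun i => if h : i < Fintype.card U then F (e.symm ⟨i, h⟩) else ∅
    have hf : ∀ i, κ (f i) < k ∧ f i ∈ 𝒜 := by
      intro i
      by_cases h : i < Fintype.card U
      · simp only [f, dif_pos h]
        exact ⟨hFκ _, hFA _⟩
      · simp only [f, dif_neg h]
        exact ⟨hnorm ▸ hk, hempty⟩
    let W : ℕ → Finset U := partialSups f
    have hWmono : Monotone W := (partialSups f).monotone
    have hW0 : W 0 = f 0 := partialSups_zero f
    have hWs : ∀ i, W (i + 1) = W i ∪ f (i + 1) := fun i => partialSups_add_one f i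
    have hWκ : ∀ i, κ (W i) < k := by
      intro i
      induction i with
      | zero => rw [hW0]; exact (hf 0).1
      | succ i ih => rw [hWs]; exact hunion _ _ ih (hf _).1
    have hWtop : W (Fintype.card U) = Finset.univ := by
      refine Finset.eq_univ_of_forall fun x => ?_
      have hx : f (e x) = F x := by simp [f]
      exact (hx ▸ le_partialSups_of_le f (e x).2.le : F x ≤ W _) (hFmem x)
    have hbelow : ∀ v, κ (catBelow W v) < k := by
      intro v
      unfold catBelow
      split_ifs
      · rw [Finset.sdiff_eq_inter_compl]
        exact hinter _ _ (hWκ _) (hcompl _ (hWκ _))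
      · exact hcompl _ (hWκ _)
    refine ⟨_, catGraph (Fintype.card U), fun s t => catLabel W s t, catGraph_isTree _,
      catGraph_ternary _, catLabel_preDecomp _ W, catLabel_exact _ W hWmono, ?_, ?_⟩
    · rintro s t (⟨h1, h2⟩ | ⟨h1, h2⟩)
      · simp only [catLabel_down W h1 h2]
        exact hbelow _
      · simp only [catLabel_up W h1 h2]
        exact hcompl _ (hbelow _)
    · intro l s hl hadj
      rcases hadj with ⟨h1, h2⟩ | ⟨h1, h2⟩
      · simp only [catLabel_down W h1 h2]
        unfold catBelow
        split_ifs with hpar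
        · -- A positive even leaf carries `W (i + 1) \ W i ⊆ f (i + 1)`.
          obtain ⟨i, hi⟩ : ∃ i, l.val / 2 = i + 1 := ⟨l.val / 2 - 1, by omega⟩
          rw [hi, Nat.add_sub_cancel, hWs]
          refine hdown _ (hf (i + 1)).2 _ fun x hx => ?_
          simp only [Finset.mem_sdiff, Finset.mem_union] at hx
          tauto
        · -- The last spine vertex carries the empty set.
          have hl' := catGraph_leaf hl
          have : l.val / 2 = Fintype.card U := by omega
          rw [this, hWtop, Finset.compl_univ]
          exact hempty
      · -- A leaf adjacent to one of its children is the root, which carries `W 0`.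
        have hs1 : s.val = 1 ∧ l.val = 0 := by
          have hl' := catGraph_leaf hl
          have := s.2
          unfold catParent at h2
          split_ifs at h2 <;> omega
        simp only [hs1.1, hs1.2]
        rw [(catLabel_odd W 0 0).1 rfl, hW0]
        exact (hf 0).2
end

section
/- Let (U, d) be a finite metric space. For every r ≥ 0 and every equivalence class B of ∼_r (i.e., every block of the single linkage dendogram θ^SL at parameter r) with |B| > 1, the family 𝒯 = {X ⊆ U : mind(X) < exp(−r) and B ⊆ X} is a mind-tangle of order exp(−r). -/
/-- In the degenerate cases `X = ∅` and `X = univ` the left side holds because `0 < exp (-r)`,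
and the right side is vacuous. -/
theorem mindOf_lt_exp_iff {U : Type*} [Fintype U] [DecidableEq U]
    (d : U → U → ℝ) (r : ℝ) (X : Finset U) :
    mindOf d X < Real.exp (-r) ↔ ∀ a ∈ X, ∀ b ∉ X, r < d a b := by
  unfold mindOf
  split_ifs with h
  · simp only [Finset.sup'_lt_iff, Finset.mem_product, Finset.mem_compl, Real.exp_lt_exp,
      neg_lt_neg_iff, Prod.forall, and_imp]
    exact ⟨fun H a ha b hb => H a b ha hb, fun H a b ha hb => H a ha b hb⟩
  · refine ⟨fun _ a ha b hb => ?_, fun _ => Real.exp_pos _⟩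
    exact absurd ⟨⟨a, ha⟩, ⟨b, Finset.mem_compl.mpr hb⟩⟩ h

/-- A chain of steps of length at most `r` cannot leave a set separated from its complement by
distances greater than `r`. -/
theorem mem_of_chain {U : Type*} {d : U → U → ℝ} {r : ℝ} {X : Finset U}
    (hX : ∀ a ∈ X, ∀ b ∉ X, r < d a b) {x v : U} (hx : x ∈ X)
    (h : Relation.ReflTransGen (fun a b : U => d a b ≤ r) x v) : v ∈ X := by
  induction h with
  | refl => exact hx
  | tail _ hbc ih =>
    by_contra hc
    exact absurd hbc (not_le.mpr (hX _ ih _ hc))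

/-- Every block `B` (with `|B| > 1`) of the single linkage dendogram at parameter `r`,
i.e. every equivalence class of the relation "joined by a chain of steps of length `≤ r`",
yields a `mind`-tangle of order `exp (−r)`. -/
theorem singleLinkage_block_tangle {U : Type*} [Fintype U] [DecidableEq U] [MetricSpace U]
    (r : ℝ) (hr : 0 ≤ r) (B : Finset U)
    (hB : ∃ x : U, ∀ v : U, v ∈ B ↔
      Relation.ReflTransGen (fun a b : U => dist a b ≤ r) x v)
    (hcard : 1 < B.card) :
    IsTangle (mindOf (fun x y : U => dist x y)) (Real.exp (-r))
      {X : Finset U | mindOf (fun x y : U => dist x y) X < Real.exp (-r) ∧ B ⊆ X} := by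
  obtain ⟨x, hx⟩ := hB
  have hxB : x ∈ B := (hx x).mpr .refl
  refine ⟨(Real.exp_pos _).le, fun X hX => hX.1, fun X hX => ?_, ?_, ?_⟩
  · have hsep := (mindOf_lt_exp_iff _ r X).mp hX
    have hsep' : ∀ a ∈ Xᶜ, ∀ b ∉ Xᶜ, r < dist a b := by
      intro a ha b hb
      rw [dist_comm]
      exact hsep b (by simpa using hb) a (by simpa using ha)
    by_cases hxX : x ∈ X
    · exact .inl ⟨hX, fun v hv => mem_of_chain hsep hxX ((hx v).mp hv)⟩
    · exact .inr ⟨(mindOf_lt_exp_iff _ r Xᶜ).mpr hsep',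
        fun v hv => mem_of_chain hsep' (Finset.mem_compl.mpr hxX) ((hx v).mp hv)⟩
  · intro X₁ h₁ X₂ h₂ X₃ h₃
    exact ⟨x, Finset.mem_inter.mpr ⟨Finset.mem_inter.mpr ⟨h₁.2 hxB, h₂.2 hxB⟩, h₃.2 hxB⟩⟩
  · intro y hy
    have := Finset.card_le_card hy.2
    rw [Finset.card_singleton] at this
    omega
end

section
/- Let (U, d) be a finite metric space. For every mind-tangle 𝒯 of order k with 0 < k ≤ 1, there is an equivalence class B of ∼_{−ln k} (i.e., a block of the single linkage dendogram θ^SL at parameter −ln k) with |B| > 1 such that 𝒯 = {X ⊆ U : mind(X) < k and B ⊆ X}. -/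
lemma mindOf_lt_iff {U : Type*} [Fintype U] [DecidableEq U] [MetricSpace U]
    {k : ℝ} (hk0 : 0 < k) (X : Finset U) :
    mindOf (fun x y : U => dist x y) X < k ↔
      ∀ x ∈ X, ∀ y ∉ X, ¬ dist x y ≤ -Real.log k := by
  have key : ∀ x y : U, Real.exp (-dist x y) < k ↔ ¬ dist x y ≤ -Real.log k := by
    intro x y
    rw [← Real.lt_log_iff_exp_lt hk0, not_le, neg_lt]
  unfold mindOf
  split_ifs with h
  · rw [Finset.sup'_lt_iff]
    simp only [key, Finset.mem_product, Finset.mem_compl, Prod.forall]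
    exact ⟨fun H x hx y hy => H x y ⟨hx, hy⟩, fun H x y hxy => H x hxy.1 y hxy.2⟩
  · refine ⟨fun _ x hx y hy => ?_, fun _ => hk0⟩
    exact absurd ⟨⟨x, hx⟩, ⟨y, Finset.mem_compl.mpr hy⟩⟩ h


/-- Every `mind`-tangle of order `k` (with `0 < k ≤ 1`) comes from a block `B` (with
`|B| > 1`) of the single linkage dendogram at parameter `−ln k`: an equivalence class of
the relation "joined by a chain of steps of length `≤ −ln k`". -/
theorem tangle_is_singleLinkage_block {U : Type*} [Fintype U] [DecidableEq U] [MetricSpace U]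
    (k : ℝ) (hk0 : 0 < k) (hk1 : k ≤ 1) (T : Set (Finset U))
    (hT : IsTangle (mindOf (fun x y : U => dist x y)) k T) :
    ∃ B : Finset U,
      (∃ x : U, ∀ v : U, v ∈ B ↔
        Relation.ReflTransGen (fun a b : U => dist a b ≤ -Real.log k) x v) ∧
      1 < B.card ∧
      T = {X : Finset U | mindOf (fun x y : U => dist x y) X < k ∧ B ⊆ X} := by
  classical
  obtain ⟨-, hlt, hor, hcap, hsing⟩ := hT
  simp only [mindOf_lt_iff hk0] at hlt hor ⊢
  set R : U → U → Prop := fun a b => dist a b ≤ -Real.log k with hR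
  have hsymm : Std.Symm R := ⟨fun a b h => by simpa [hR, dist_comm] using h⟩
  -- A set crossed by no short pair contains the block of each of its points.
  have hclosed : ∀ X : Finset U, (∀ x ∈ X, ∀ y ∉ X, ¬ R x y) →
      ∀ x ∈ X, ∀ y, Relation.ReflTransGen R x y → y ∈ X := by
    intro X hX x hx y hxy
    induction hxy with
    | refl => exact hx
    | tail _ hbc ih => exact by_contra fun hc => hX _ ih _ hc hbc
  have hne : T.Nonempty := by
    rcases hor Finset.univ (fun _ _ y hy => absurd (Finset.mem_univ y) hy) with h | h
    exacts [⟨_, h⟩, ⟨_, h⟩]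
  obtain ⟨M, hM, hmin⟩ := Set.exists_min_image T Finset.card T.toFinite hne
  obtain ⟨x, hx⟩ := hcap M hM M hM M hM
  replace hx : x ∈ M := (Finset.mem_inter.mp hx).2
  set C : Finset U := Finset.univ.filter (fun v => Relation.ReflTransGen R x v) with hC
  have memC : ∀ v, v ∈ C ↔ Relation.ReflTransGen R x v := fun v => by simp [hC]
  have hxC : x ∈ C := (memC x).2 .refl
  have hCcl : ∀ a ∈ C, ∀ b ∉ C, ¬ R a b := fun a ha b hb hab =>
    hb ((memC b).2 (((memC a).1 ha).tail hab))
  have hCT : C ∈ T := by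
    refine (hor C hCcl).resolve_right fun hCc => ?_
    have hcl : ∀ a ∈ M ∩ Cᶜ, ∀ b ∉ M ∩ Cᶜ, ¬ R a b := by
      intro a ha b hb hab
      rw [Finset.mem_inter] at ha hb
      exact hb ⟨by_contra fun h => hlt M hM a ha.1 b h hab,
        by_contra fun h => hlt _ hCc a ha.2 b h hab⟩
    rcases hor _ hcl with h | h
    · have hcard_lt : (M ∩ Cᶜ).card < M.card :=
        Finset.card_lt_card ⟨Finset.inter_subset_left, fun hs =>
          Finset.mem_compl.mp (Finset.mem_inter.mp (hs hx)).2 hxC⟩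
      exact absurd (hmin _ h) (not_le.mpr hcard_lt)
    · obtain ⟨z, hz⟩ := hcap M hM _ hCc _ h
      exact Finset.mem_compl.mp (Finset.mem_inter.mp hz).2 (Finset.mem_inter.mp hz).1
  refine ⟨C, ⟨x, memC⟩, ?_, ?_⟩
  · by_contra hcard
    have hCx : C = {x} := Finset.eq_singleton_iff_unique_mem.mpr
      ⟨hxC, fun y hy => Finset.card_le_one.mp (not_lt.mp hcard) y hy x hxC⟩
    exact hsing x (hCx ▸ hCT)
  · ext X
    refine ⟨fun hX => ⟨hlt X hX, fun v hv => ?_⟩, fun hX => ?_⟩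
    · obtain ⟨z, hz⟩ := hcap X hX C hCT C hCT
      simp only [Finset.mem_inter] at hz
      have hzx : Relation.ReflTransGen R z x :=
        (Relation.ReflTransGen.stdSymm (r := R)).symm _ _ ((memC z).1 hz.2)
      exact hclosed X (hlt X hX) z hz.1.1 v (hzx.trans ((memC v).1 hv))
    · refine (hor X hX.1).resolve_right fun hXc => ?_
      obtain ⟨z, hz⟩ := hcap C hCT C hCT _ hXc
      simp only [Finset.mem_inter, Finset.mem_compl] at hz
      exact hz.2 (hX.2 hz.1.1)
end

section
/- For every dendogram θ over a finite set U there exists a maximum-submodular connectivity function κ : 2^U → [0, 1) such that: (a) for every r ≥ 0 and every block B ∈ θ(r) with |B| > 1, the family {X ⊆ U : κ(X) < exp(−r) and B ⊆ X} is a κ-tangle of order exp(−r); and (b) for every κ-tangle 𝒯 of order k with 0 < k ≤ 1 there is a block B ∈ θ(−ln k) with |B| > 1 such that 𝒯 = {X ⊆ U : κ(X) < k and B ⊆ X}. -/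
/-- `C` is a partition of the finite universe `U` into nonempty blocks. -/
def IsPartitionF {U : Type*} [Fintype U] [DecidableEq U] (C : Set (Finset U)) : Prop :=
  (∅ : Finset U) ∉ C ∧ ∀ a : U, ∃! B : Finset U, B ∈ C ∧ a ∈ B

/-- A dendogram over the finite universe `U`: a map from `[0, ∞)` to partitions of `U`
starting with singletons, eventually reaching `{U}`, refining as the parameter grows, and
right-continuous. -/
structure Dendogram (U : Type*) [Fintype U] [DecidableEq U] where
  θ : ℝ → Set (Finset U)
  partition : ∀ r : ℝ, 0 ≤ r → IsPartitionF (θ r)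
  init : θ 0 = {B : Finset U | ∃ x : U, B = {x}}
  eventually : ∃ t₀ : ℝ, 0 ≤ t₀ ∧ ∀ t : ℝ, t₀ ≤ t → θ t = {(Finset.univ : Finset U)}
  refines : ∀ r s : ℝ, 0 ≤ r → r ≤ s → ∀ B ∈ θ r, ∃ B' ∈ θ s, B ⊆ B'
  rightCont : ∀ r : ℝ, 0 ≤ r → ∃ ε : ℝ, 0 < ε ∧ ∀ t : ℝ, r ≤ t → t ≤ r + ε → θ t = θ r

namespace Dendogram

variable {U : Type*} [Fintype U] [DecidableEq U] (D : Dendogram U)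

/-- The merging height of `x` and `y`: the least `r ≥ 0` at which they share a block. -/
noncomputable def dist (x y : U) : ℝ :=
  sInf {r : ℝ | 0 ≤ r ∧ ∃ B ∈ D.θ r, x ∈ B ∧ y ∈ B}

lemma dist_comm (x y : U) : D.dist x y = D.dist y x := by
  simp only [dist, and_comm]

lemma exists_block_mono {x y : U} {r s : ℝ} (hr : 0 ≤ r) (hrs : r ≤ s)
    (h : ∃ B ∈ D.θ r, x ∈ B ∧ y ∈ B) : ∃ B ∈ D.θ s, x ∈ B ∧ y ∈ B := by
  obtain ⟨B, hB, hx, hy⟩ := h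
  obtain ⟨B', hB', hsub⟩ := D.refines r s hr hrs B hB
  exact ⟨B', hB', hsub hx, hsub hy⟩

lemma merging_bddBelow (x y : U) :
    BddBelow {r : ℝ | 0 ≤ r ∧ ∃ B ∈ D.θ r, x ∈ B ∧ y ∈ B} :=
  ⟨0, fun _ h => h.1⟩

/-- The infimum defining `dist` is over a nonempty set since `θ` is eventually `{U}`, and it is
attained by right-continuity. -/
lemma dist_mem (x y : U) :
    0 ≤ D.dist x y ∧ ∃ B ∈ D.θ (D.dist x y), x ∈ B ∧ y ∈ B := by
  have hne : {r : ℝ | 0 ≤ r ∧ ∃ B ∈ D.θ r, x ∈ B ∧ y ∈ B}.Nonempty := by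
    obtain ⟨t, ht, h⟩ := D.eventually
    exact ⟨t, ht, Finset.univ, by rw [h t le_rfl]; rfl, by simp, by simp⟩
  have h0 : 0 ≤ D.dist x y := le_csInf hne fun _ h => h.1
  refine ⟨h0, ?_⟩
  obtain ⟨ε, hε, h⟩ := D.rightCont _ h0
  obtain ⟨r, hr, hlt⟩ := exists_lt_of_csInf_lt hne (lt_add_of_pos_right (D.dist x y) hε)
  have hle : D.dist x y ≤ r := csInf_le (D.merging_bddBelow x y) hr
  rw [← h r hle hlt.le]
  exact hr.2

lemma exists_block_iff_dist_le {x y : U} {r : ℝ} (hr : 0 ≤ r) :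
    (∃ B ∈ D.θ r, x ∈ B ∧ y ∈ B) ↔ D.dist x y ≤ r :=
  ⟨fun h => csInf_le (D.merging_bddBelow x y) ⟨hr, h⟩,
    fun h => D.exists_block_mono (D.dist_mem x y).1 h (D.dist_mem x y).2⟩

/-- Distinct points are separated at height `0`, where all blocks are singletons. -/
lemma dist_pos {x y : U} (hxy : x ≠ y) : 0 < D.dist x y := by
  by_contra h
  obtain ⟨B, hB, hx, hy⟩ := (D.exists_block_iff_dist_le le_rfl).2 (not_lt.1 h)
  rw [D.init] at hB
  obtain ⟨z, rfl⟩ := hB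
  simp only [Finset.mem_singleton] at hx hy
  exact hxy (hx.trans hy.symm)

/-- The connectivity of `X`: the maximum of `exp (-d x y)` over `x ∈ X` and `y ∉ X`. It is taken
in `ℝ≥0`, so that it is `0` when there are no such pairs. -/
noncomputable def kappa (X : Finset U) : ℝ :=
  (((X ×ˢ Xᶜ).sup fun p => Real.toNNReal (Real.exp (-D.dist p.1 p.2)) : NNReal) : ℝ)

lemma kappa_nonneg (X : Finset U) : 0 ≤ D.kappa X := NNReal.coe_nonneg _

lemma kappa_lt_iff {X : Finset U} {k : ℝ} (hk : 0 < k) :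
    D.kappa X < k ↔ ∀ x ∈ X, ∀ y ∉ X, Real.exp (-D.dist x y) < k := by
  lift k to NNReal using hk.le
  rw [kappa, NNReal.coe_lt_coe, Finset.sup_lt_iff (by simpa using hk)]
  simp only [Finset.mem_product, Finset.mem_compl, Prod.forall, and_imp,
    Real.toNNReal_lt_iff_lt_coe (Real.exp_pos _).le]
  exact ⟨fun h x hx y hy => h x y hx hy, fun h x y hx hy => h x hx y hy⟩

lemma kappa_compl_le (X : Finset U) : D.kappa Xᶜ ≤ D.kappa X := by
  refine le_of_forall_gt fun k hk => ?_
  have hk0 := (D.kappa_nonneg X).trans_lt hk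
  rw [kappa_lt_iff D hk0] at hk ⊢
  intro x hx y hy
  rw [D.dist_comm]
  exact hk y (by simpa using hy) x (by simpa using hx)

lemma kappa_compl (X : Finset U) : D.kappa X = D.kappa Xᶜ :=
  le_antisymm (by simpa using D.kappa_compl_le Xᶜ) (D.kappa_compl_le X)

lemma kappa_inter_lt {X Y : Finset U} {k : ℝ} (hX : D.kappa X < k) (hY : D.kappa Y < k) :
    D.kappa (X ∩ Y) < k := by
  have hk0 := (D.kappa_nonneg X).trans_lt hX
  rw [kappa_lt_iff D hk0] at *
  intro x hx y hy
  rw [Finset.mem_inter] at hx hy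
  by_cases h : y ∈ X
  · exact hY x hx.2 y fun h' => hy ⟨h, h'⟩
  · exact hX x hx.1 y h

lemma kappa_union_lt {X Y : Finset U} {k : ℝ} (hX : D.kappa X < k) (hY : D.kappa Y < k) :
    D.kappa (X ∪ Y) < k := by
  rw [kappa_compl] at *
  rw [Finset.compl_union]
  exact D.kappa_inter_lt hX hY

lemma kappa_empty : D.kappa ∅ = 0 := by
  simp [kappa]

lemma kappa_lt_one (X : Finset U) : D.kappa X < 1 := by
  rw [kappa_lt_iff D one_pos]
  intro x hx y hy
  rw [Real.exp_lt_one_iff, neg_lt_zero]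
  exact D.dist_pos fun h => hy (h ▸ hx)

/-- The sets of connectivity below `exp (-r)` are exactly the unions of blocks of `θ r`. -/
lemma kappa_lt_exp_iff {X : Finset U} {r : ℝ} (hr : 0 ≤ r) :
    D.kappa X < Real.exp (-r) ↔ ∀ B ∈ D.θ r, ∀ x ∈ B, x ∈ X → B ⊆ X := by
  rw [kappa_lt_iff D (Real.exp_pos _)]
  simp only [Real.exp_lt_exp, neg_lt_neg_iff]
  constructor
  · intro h B hB x hxB hxX y hyB
    by_contra hy
    exact (h x hxX y hy).not_ge ((D.exists_block_iff_dist_le hr).1 ⟨B, hB, hxB, hyB⟩)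
  · intro h x hx y hy
    by_contra hlt
    obtain ⟨B, hB, hxB, hyB⟩ := (D.exists_block_iff_dist_le hr).2 (not_lt.1 hlt)
    exact hy (h B hB x hxB hx hyB)

lemma kappa_block_lt {B : Finset U} {r : ℝ} (hr : 0 ≤ r) (hB : B ∈ D.θ r) :
    D.kappa B < Real.exp (-r) := by
  refine (D.kappa_lt_exp_iff hr).2 fun B' hB' x hx' hx => ?_
  rw [((D.partition r hr).2 x).unique ⟨hB', hx'⟩ ⟨hB, hx⟩]

lemma isTangle_of_block {B : Finset U} {r : ℝ} (hr : 0 ≤ r) (hB : B ∈ D.θ r)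
    (hcard : 1 < B.card) :
    IsTangle D.kappa (Real.exp (-r)) {X : Finset U | D.kappa X < Real.exp (-r) ∧ B ⊆ X} := by
  obtain ⟨b, hb⟩ := Finset.card_pos.1 (zero_lt_one.trans hcard)
  refine ⟨(Real.exp_pos _).le, fun X hX => hX.1, fun X hX => ?_, ?_, ?_⟩
  · by_cases h : b ∈ X
    · exact Or.inl ⟨hX, (D.kappa_lt_exp_iff hr).1 hX B hB b hb h⟩
    · rw [kappa_compl] at hX
      exact Or.inr ⟨hX, (D.kappa_lt_exp_iff hr).1 hX B hB b hb (by simpa using h)⟩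
  · intro X hX Y hY Z hZ
    exact ⟨b, by simp [hX.2 hb, hY.2 hb, hZ.2 hb]⟩
  · intro x hx
    have := Finset.card_le_card hx.2
    rw [Finset.card_singleton] at this
    omega

lemma exists_block_of_isTangle {r : ℝ} (hr : 0 ≤ r) {T : Set (Finset U)}
    (hT : IsTangle D.kappa (Real.exp (-r)) T) :
    ∃ B ∈ D.θ r, 1 < B.card ∧ T = {X : Finset U | D.kappa X < Real.exp (-r) ∧ B ⊆ X} := by
  obtain ⟨-, hlt, hor, hinter, hsing⟩ := hT
  have hdisj : ∀ {X Y : Finset U}, X ∈ T → Y ∈ T → ¬ Disjoint X Y := by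
    intro X Y hX hY h
    have := hinter X hX Y hY Y hY
    rw [Finset.disjoint_iff_inter_eq_empty.1 h] at this
    simp at this
  have hcap : ∀ {X Y : Finset U}, X ∈ T → Y ∈ T → X ∩ Y ∈ T := by
    intro X Y hX hY
    refine (hor _ (D.kappa_inter_lt (hlt X hX) (hlt Y hY))).resolve_right fun h => ?_
    have := hinter X hX Y hY _ h
    rw [Finset.inter_compl] at this
    simp at this
  have hTne : T.Nonempty := by
    rcases hor ∅ (by rw [kappa_empty]; exact Real.exp_pos _) with h | h
    exacts [⟨_, h⟩, ⟨_, h⟩]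
  obtain ⟨M, hM⟩ := T.toFinite.exists_minimal hTne
  obtain ⟨a, ha⟩ : M.Nonempty := by simpa using hinter M hM.1 M hM.1 M hM.1
  obtain ⟨B, ⟨hB, haB⟩, -⟩ := (D.partition r hr).2 a
  -- Otherwise `M \ B` would be a member strictly below the minimal member `M`.
  have hBT : B ∈ T := by
    refine (hor B (D.kappa_block_lt hr hB)).resolve_right fun h => ?_
    have := hM.2 (hcap hM.1 h) Finset.inter_subset_left ha
    simp [haB] at this
  refine ⟨B, hB, ?_, ?_⟩
  · by_contra h
    have h1 : B.card = 1 := le_antisymm (not_lt.1 h) (Finset.card_pos.2 ⟨a, haB⟩)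
    obtain ⟨x, rfl⟩ := Finset.card_eq_one.1 h1
    exact hsing x hBT
  · ext X
    refine ⟨fun hX => ⟨hlt X hX, ?_⟩, fun ⟨hX, hBX⟩ => ?_⟩
    · obtain ⟨b, hb, hbX⟩ := Finset.not_disjoint_iff.1 (hdisj hBT hX)
      exact (D.kappa_lt_exp_iff hr).1 (hlt X hX) B hB b hb hbX
    · refine (hor X hX).resolve_right fun h => hdisj hBT h ?_
      exact Finset.disjoint_left.2 fun b hb hb' => (Finset.mem_compl.1 hb') (hBX hb)

end Dendogram

/-- For every dendogram `θ` over `U` there is a maximum-submodular connectivity function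
`κ` with values in `[0, 1)` whose tangles correspond exactly to the blocks of `θ`:
every block `B ∈ θ(r)` with `|B| > 1` gives a `κ`-tangle of order `exp (−r)`, and every
`κ`-tangle of order `k ∈ (0, 1]` arises this way from a block of `θ(−ln k)`. -/
theorem dendogram_to_maxSubmodular {U : Type*} [Fintype U] [DecidableEq U] [Nonempty U]
    (D : Dendogram U) :
    ∃ κ : Finset U → ℝ,
      κ (∅ : Finset U) = 0 ∧
      (∀ X : Finset U, κ X = κ Xᶜ) ∧
      (∀ X Y : Finset U, max (κ (X ∩ Y)) (κ (X ∪ Y)) ≤ max (κ X) (κ Y)) ∧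
      (∀ X : Finset U, 0 ≤ κ X ∧ κ X < 1) ∧
      (∀ r : ℝ, 0 ≤ r → ∀ B ∈ D.θ r, 1 < B.card →
        IsTangle κ (Real.exp (-r)) {X : Finset U | κ X < Real.exp (-r) ∧ B ⊆ X}) ∧
      (∀ (k : ℝ) (T : Set (Finset U)), 0 < k → k ≤ 1 → IsTangle κ k T →
        ∃ B ∈ D.θ (-Real.log k), 1 < B.card ∧
          T = {X : Finset U | κ X < k ∧ B ⊆ X}) := by
  refine ⟨D.kappa, D.kappa_empty, D.kappa_compl, fun X Y => ?_,
    fun X => ⟨D.kappa_nonneg X, D.kappa_lt_one X⟩, fun r hr B hB hcard =>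
    D.isTangle_of_block hr hB hcard, fun k T hk hk1 hT => ?_⟩
  · refine le_of_forall_gt fun k hk => ?_
    rw [max_lt_iff] at hk ⊢
    exact ⟨D.kappa_inter_lt hk.1 hk.2, D.kappa_union_lt hk.1 hk.2⟩
  · have hr : 0 ≤ -Real.log k := neg_nonneg.2 (Real.log_nonpos hk.le hk1)
    have hexp : Real.exp (-(-Real.log k)) = k := by rw [neg_neg, Real.exp_log hk]
    simpa only [hexp] using D.exists_block_of_isTangle hr (T := T) (by rwa [hexp])
end

section
/- For every maximum-submodular connectivity function κ on a finite set U taking values in [0, 1) and satisfying κ(X) > 0 for all X with ∅ ≠ X ≠ U, there exists a dendogram θ over U such that: (a) for every r ≥ 0 and every block B ∈ θ(r) with |B| > 1, the family {X ⊆ U : κ(X) < exp(−r) and B ⊆ X} is a κ-tangle of order exp(−r); and (b) for every κ-tangle 𝒯 of order k with 0 < k ≤ 1 there is a block B ∈ θ(−ln k) with |B| > 1 such that 𝒯 = {X ⊆ U : κ(X) < k and B ⊆ X}. -/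
open Filter Topology

open scoped Classical in
/-- The atom containing `a` of the algebra of sets with `κ X < k`. The defining relation is
one-sided; it is symmetric because `κ X = κ Xᶜ`. -/
noncomputable def atomOf {U : Type*} [Fintype U] (κ : Finset U → ℝ) (k : ℝ) (a : U) : Finset U :=
  Finset.univ.filter fun b => ∀ X : Finset U, κ X < k → a ∈ X → b ∈ X

section

variable {U : Type*} [Fintype U] {κ : Finset U → ℝ} {k : ℝ}

lemma mem_atomOf {a b : U} :
    b ∈ atomOf κ k a ↔ ∀ X : Finset U, κ X < k → a ∈ X → b ∈ X := by
  simp [atomOf]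

lemma self_mem_atomOf (a : U) : a ∈ atomOf κ k a :=
  mem_atomOf.2 fun _ _ h => h

lemma atomOf_subset {a : U} {X : Finset U} (hX : κ X < k) (ha : a ∈ X) : atomOf κ k a ⊆ X :=
  fun _ hb => mem_atomOf.1 hb X hX ha

lemma atomOf_congr {l : ℝ} (h : ∀ X : Finset U, κ X < k ↔ κ X < l) :
    atomOf κ k = atomOf κ l := by
  ext a c
  simp only [mem_atomOf, h]

variable [DecidableEq U]

lemma atomOf_eq_of_mem (hsym : ∀ X : Finset U, κ X = κ Xᶜ) {a b : U}
    (hb : b ∈ atomOf κ k a) : atomOf κ k a = atomOf κ k b := by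
  have hab : ∀ X : Finset U, κ X < k → (a ∈ X ↔ b ∈ X) := by
    intro X hX
    refine ⟨mem_atomOf.1 hb X hX, fun hbX => ?_⟩
    by_contra haX
    have := mem_atomOf.1 hb Xᶜ (by rwa [← hsym]) (by simpa using haX)
    simp [hbX] at this
  ext c
  simp only [mem_atomOf]
  exact forall_congr' fun X => forall_congr' fun hX => by rw [hab X hX]

lemma isPartitionF_range_atomOf (hsym : ∀ X : Finset U, κ X = κ Xᶜ) :
    IsPartitionF (Set.range (atomOf κ k)) := by
  constructor
  · rintro ⟨a, ha⟩
    have := self_mem_atomOf (κ := κ) (k := k) a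
    simp [ha] at this
  · intro a
    refine ⟨atomOf κ k a, ⟨⟨a, rfl⟩, self_mem_atomOf a⟩, ?_⟩
    rintro _ ⟨⟨c, rfl⟩, hc⟩
    exact atomOf_eq_of_mem hsym hc

/-- The dendogram of atoms of the algebras of sets with `κ X < exp (-r)`. -/
noncomputable def atomDendogram [Nonempty U] (κ : Finset U → ℝ)
    (hsym : ∀ X : Finset U, κ X = κ Xᶜ) (hlt : ∀ X : Finset U, κ X < 1)
    (hpos : ∀ X : Finset U, X ≠ ∅ → X ≠ Finset.univ → 0 < κ X) : Dendogram U where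
  θ r := Set.range (atomOf κ (Real.exp (-r)))
  partition r _ := isPartitionF_range_atomOf hsym
  init := by
    have key : ∀ a : U, atomOf κ (Real.exp (-0)) a = {a} := fun a =>
      (atomOf_subset (by simpa using hlt {a}) (by simp)).antisymm
        (by simpa using self_mem_atomOf a)
    ext B
    simp only [Set.mem_range, key, Set.mem_ofPred_eq, eq_comm]
  eventually := by
    have h0 : Tendsto (fun t : ℝ => Real.exp (-t)) atTop (𝓝 0) :=
      Real.tendsto_exp_neg_atTop_nhds_zero
    have h1 : ∀ᶠ t : ℝ in atTop, ∀ X : Finset U, X ≠ ∅ → X ≠ Finset.univ →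
        Real.exp (-t) < κ X := by
      refine eventually_all.2 fun X => ?_
      by_cases hX : X ≠ ∅ ∧ X ≠ Finset.univ
      · filter_upwards [h0.eventually_lt_const (hpos X hX.1 hX.2)] with t ht _ _ using ht
      · exact Eventually.of_forall fun t h h' => absurd ⟨h, h'⟩ hX
    obtain ⟨t₀, ht₀⟩ := eventually_atTop.1 h1
    refine ⟨max t₀ 0, le_max_right _ _, fun t ht => ?_⟩
    have key : ∀ a : U, atomOf κ (Real.exp (-t)) a = Finset.univ := by
      intro a
      refine Finset.eq_univ_iff_forall.2 fun b => mem_atomOf.2 fun X hX ha => ?_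
      by_contra hb
      refine lt_asymm hX (ht₀ t ((le_max_left _ _).trans ht) X ?_ ?_)
      · rintro rfl; simp at ha
      · rintro rfl; simp at hb
    ext B
    simp [key, eq_comm]
  refines := by
    rintro r s _ hrs _ ⟨a, rfl⟩
    refine ⟨_, ⟨a, rfl⟩, fun b hb => mem_atomOf.2 fun X hX => mem_atomOf.1 hb X ?_⟩
    exact hX.trans_le (Real.exp_le_exp.2 (by linarith))
  rightCont := by
    intro r _
    have h1 : ∀ᶠ t : ℝ in 𝓝 r, ∀ X : Finset U, κ X < Real.exp (-r) → κ X < Real.exp (-t) := by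
      refine eventually_all.2 fun X => ?_
      by_cases hX : κ X < Real.exp (-r)
      · have hc : Tendsto (fun t : ℝ => Real.exp (-t)) (𝓝 r) (𝓝 (Real.exp (-r))) :=
          (by fun_prop : Continuous fun t : ℝ => Real.exp (-t)).tendsto r
        filter_upwards [hc.eventually_const_lt hX] with t ht _ using ht
      · exact Eventually.of_forall fun t h => absurd h hX
    obtain ⟨ε, hε, h⟩ := Metric.eventually_nhds_iff.1 h1
    refine ⟨ε / 2, by positivity, fun t hrt ht => ?_⟩
    have hd : dist t r < ε := by
      rw [Real.dist_eq, abs_of_nonneg (by linarith)]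
      linarith
    rw [atomOf_congr fun X => ⟨fun hX => hX.trans_le (Real.exp_le_exp.2 (by linarith)), h hd X⟩]

lemma isTangle_of_atomOf (hsym : ∀ X : Finset U, κ X = κ Xᶜ) (hk : 0 ≤ k) {a : U}
    (ha : 1 < (atomOf κ k a).card) :
    IsTangle κ k {X : Finset U | κ X < k ∧ atomOf κ k a ⊆ X} := by
  refine ⟨hk, fun X hX => hX.1, fun X hX => ?_, ?_, ?_⟩
  · by_cases haX : a ∈ X
    · exact Or.inl ⟨hX, atomOf_subset hX haX⟩
    · have hX' : κ Xᶜ < k := by rwa [← hsym]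
      exact Or.inr ⟨hX', atomOf_subset hX' (by simpa using haX)⟩
  · intro X hX Y hY Z hZ
    have h := self_mem_atomOf (κ := κ) (k := k) a
    exact ⟨a, by simp [hX.2 h, hY.2 h, hZ.2 h]⟩
  · intro x hx
    have := Finset.card_le_card hx.2
    simp at this
    omega

namespace IsTangle

variable {T : Set (Finset U)}

/-- If `X ∩ Y` were not in the tangle, its complement would be, and then `X`, `Y` and `(X ∩ Y)ᶜ`
would have empty intersection. -/
lemma inter_mem (hT : IsTangle κ k T)
    (hmax : ∀ X Y : Finset U, max (κ (X ∩ Y)) (κ (X ∪ Y)) ≤ max (κ X) (κ Y))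
    {X Y : Finset U} (hX : X ∈ T) (hY : Y ∈ T) : X ∩ Y ∈ T := by
  obtain ⟨-, h0, h1, h2, -⟩ := hT
  have hlt : κ (X ∩ Y) < k :=
    (le_max_left _ _).trans_lt ((hmax X Y).trans_lt (max_lt (h0 X hX) (h0 Y hY)))
  refine (h1 _ hlt).resolve_right fun hc => ?_
  have := h2 X hX Y hY _ hc
  rw [Finset.inter_compl] at this
  simp at this

lemma nonempty_of_mem (hT : IsTangle κ k T) {X : Finset U} (hX : X ∈ T) : X.Nonempty := by
  simpa using hT.2.2.2.1 X hX X hX X hX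

lemma exists_least_s13 (hT : IsTangle κ k T)
    (hmax : ∀ X Y : Finset U, max (κ (X ∩ Y)) (κ (X ∪ Y)) ≤ max (κ X) (κ Y))
    (hne : T.Nonempty) : ∃ B ∈ T, ∀ X ∈ T, B ⊆ X := by
  obtain ⟨B, hB⟩ := T.toFinite.exists_minimal hne
  refine ⟨B, hB.prop, fun X hX => ?_⟩
  exact (hB.le_of_le (hT.inter_mem hmax hB.prop hX) Finset.inter_subset_left).trans
    Finset.inter_subset_right

end IsTangle

end

/-- For every maximum-submodular connectivity function `κ` with values in `[0, 1)` that is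
strictly positive on nontrivial sets, there is a dendogram over `U` whose blocks
correspond exactly to the `κ`-tangles. -/
theorem maxSubmodular_to_dendogram {U : Type*} [Fintype U] [DecidableEq U] [Nonempty U]
    (κ : Finset U → ℝ)
    (hnorm : κ (∅ : Finset U) = 0)
    (hsym : ∀ X : Finset U, κ X = κ Xᶜ)
    (hmax : ∀ X Y : Finset U, max (κ (X ∩ Y)) (κ (X ∪ Y)) ≤ max (κ X) (κ Y))
    (hrange : ∀ X : Finset U, 0 ≤ κ X ∧ κ X < 1)
    (hpos : ∀ X : Finset U, X ≠ ∅ → X ≠ Finset.univ → 0 < κ X) :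
    ∃ D : Dendogram U,
      (∀ r : ℝ, 0 ≤ r → ∀ B ∈ D.θ r, 1 < B.card →
        IsTangle κ (Real.exp (-r)) {X : Finset U | κ X < Real.exp (-r) ∧ B ⊆ X}) ∧
      (∀ (k : ℝ) (T : Set (Finset U)), 0 < k → k ≤ 1 → IsTangle κ k T →
        ∃ B ∈ D.θ (-Real.log k), 1 < B.card ∧
          T = {X : Finset U | κ X < k ∧ B ⊆ X}) := by
  refine ⟨atomDendogram κ hsym (fun X => (hrange X).2) hpos, ?_, ?_⟩
  · rintro r _ _ ⟨a, rfl⟩ hcard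
    exact isTangle_of_atomOf hsym (Real.exp_pos _).le hcard
  · intro k T hk _ hT
    have hne : T.Nonempty := by
      rcases hT.2.2.1 ∅ (by rwa [hnorm]) with h | h
      exacts [⟨_, h⟩, ⟨_, h⟩]
    obtain ⟨B, hB, hleast⟩ := hT.exists_least_s13 hmax hne
    obtain ⟨a, ha⟩ := hT.nonempty_of_mem hB
    have hmem : ∀ X : Finset U, κ X < k → ∀ c ∈ B, c ∈ X → X ∈ T := by
      intro X hX c hcB hcX
      refine (hT.2.2.1 X hX).resolve_right fun h => ?_
      have := hleast _ h hcB
      simp [hcX] at this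
    have hBa : atomOf κ k a = B :=
      (atomOf_subset (hT.2.1 B hB) ha).antisymm fun b hb =>
        mem_atomOf.2 fun X hX haX => hleast X (hmem X hX a ha haX) hb
    refine ⟨B, ⟨a, ?_⟩, ?_, ?_⟩
    · rwa [neg_neg, Real.exp_log hk]
    · by_contra hcard
      have h1 : B.card = 1 :=
        le_antisymm (not_lt.1 hcard) (Finset.card_pos.2 ⟨a, ha⟩)
      obtain ⟨x, rfl⟩ := Finset.card_eq_one.1 h1
      exact hT.2.2.2.2 x hB
    · ext X
      exact ⟨fun hX => ⟨hT.2.1 X hX, hleast X hX⟩, fun hX => hmem X hX.1 a ha (hX.2 ha)⟩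
end

section
/- Let U be a finite set with at least two elements and let κ be a maximum-submodular connectivity function on U taking values in [0, 1) with κ(X) > 0 for all X with ∅ ≠ X ≠ U. Define u_κ : U × U → ℝ by u_κ(x, y) = max over X ⊆ U with x ∈ X and y ∉ X of −ln(κ(X)) for x ≠ y, and u_κ(x, x) = 0. Then u_κ is an ultrametric on U. -/
/-!
The function `ukappa κ` records, for each pair of points, the best value of `-log ∘ κ` over
the sets separating them. If `X` attains this value for `x` and `z`, then any third point `y`
lies on one side of `X`, so `X` also separates `x` from `y` (when `y ∉ X`) or `y` from `z`
(when `y ∈ X`); this is the strong triangle inequality. Passing to complements gives the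
symmetry of `ukappa κ` from that of `κ`, and positivity off the diagonal holds because
a separating set is nontrivial, so that `0 < κ X < 1`.
The argument rests on `le_ukappa` and `exists_ukappa_eq`, which say that the value is an upper
bound over separating sets and that it is attained.
-/

/-- `u_κ (x, y)`: for `x ≠ y`, the maximum of `−ln (κ X)` over all sets `X` with `x ∈ X`
and `y ∉ X`; and `u_κ (x, x) = 0`. -/
noncomputable def ukappa {U : Type*} [Fintype U] [DecidableEq U]
    (κ : Finset U → ℝ) (x y : U) : ℝ :=
  if h : x = y then 0
  else
    (Finset.univ.filter fun X : Finset U => x ∈ X ∧ y ∉ X).sup'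
      ⟨{x}, Finset.mem_filter.mpr ⟨Finset.mem_univ _,
        Finset.mem_singleton_self x,
        fun hy => h (Finset.mem_singleton.mp hy).symm⟩⟩
      (fun X => -Real.log (κ X))

/-- A set separating `x` from `y` bounds `ukappa κ x y` from below; the separation itself
forces `x ≠ y`, so the diagonal convention does not interfere. -/
lemma le_ukappa {U : Type*} [Fintype U] [DecidableEq U] (κ : Finset U → ℝ) {x y : U}
    {X : Finset U} (hx : x ∈ X) (hy : y ∉ X) : -Real.log (κ X) ≤ ukappa κ x y := by
  have hxy : x ≠ y := fun h => hy (h ▸ hx)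
  rw [ukappa, dif_neg hxy]
  exact Finset.le_sup' (fun X => -Real.log (κ X)) (by simp [hx, hy])

/-- Off the diagonal the maximum defining `ukappa κ x y` is attained by a separating set. -/
lemma exists_ukappa_eq {U : Type*} [Fintype U] [DecidableEq U] (κ : Finset U → ℝ) {x y : U}
    (hxy : x ≠ y) : ∃ X : Finset U, x ∈ X ∧ y ∉ X ∧ ukappa κ x y = -Real.log (κ X) := by
  rw [ukappa, dif_neg hxy]
  obtain ⟨X, hX, h⟩ := Finset.exists_mem_eq_sup' (s := Finset.univ.filter
    fun X : Finset U => x ∈ X ∧ y ∉ X) ⟨{x}, by simp [hxy.symm]⟩ (fun X => -Real.log (κ X))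
  have hX' := (Finset.mem_filter.mp hX).2
  exact ⟨X, hX'.1, hX'.2, h⟩

/-- For a maximum-submodular connectivity function `κ` with values in `[0, 1)` that is
strictly positive on nontrivial sets, `u_κ` is an ultrametric on `U`. -/
theorem ukappa_ultrametric {U : Type*} [Fintype U] [DecidableEq U]
    (κ : Finset U → ℝ)
    (hnorm : κ (∅ : Finset U) = 0)
    (hsym : ∀ X : Finset U, κ X = κ Xᶜ)
    (hmax : ∀ X Y : Finset U, max (κ (X ∩ Y)) (κ (X ∪ Y)) ≤ max (κ X) (κ Y))
    (hrange : ∀ X : Finset U, 0 ≤ κ X ∧ κ X < 1)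
    (hpos : ∀ X : Finset U, X ≠ ∅ → X ≠ Finset.univ → 0 < κ X)
    (hcard : 1 < Fintype.card U) :
    (∀ x y : U, 0 ≤ ukappa κ x y) ∧
    (∀ x y : U, ukappa κ x y = 0 ↔ x = y) ∧
    (∀ x y : U, ukappa κ x y = ukappa κ y x) ∧
    (∀ x y z : U, ukappa κ x z ≤ max (ukappa κ x y) (ukappa κ y z)) := by
  have hself : ∀ x : U, ukappa κ x x = 0 := fun x => by simp [ukappa]
  have hlt : ∀ x y : U, x ≠ y → 0 < ukappa κ x y := by
    intro x y hxy
    obtain ⟨X, hx, hy, h⟩ := exists_ukappa_eq κ hxy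
    have h0 : 0 < κ X :=
      hpos X (Finset.ne_empty_of_mem hx) (fun hX => hy (hX ▸ Finset.mem_univ y))
    rw [h]
    exact neg_pos.mpr (Real.log_neg h0 (hrange X).2)
  have hnn : ∀ x y : U, 0 ≤ ukappa κ x y := by
    intro x y
    rcases eq_or_ne x y with rfl | hxy
    · exact (hself x).ge
    · exact (hlt x y hxy).le
  have hle : ∀ x y : U, ukappa κ x y ≤ ukappa κ y x := by
    intro x y
    rcases eq_or_ne x y with rfl | hxy
    · exact le_rfl
    · obtain ⟨X, hx, hy, h⟩ := exists_ukappa_eq κ hxy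
      rw [h, hsym X]
      exact le_ukappa κ (Finset.mem_compl.mpr hy) (by simpa using hx)
  refine ⟨hnn, fun x y => ⟨fun h => ?_, fun h => h ▸ hself x⟩,
    fun x y => le_antisymm (hle x y) (hle y x), fun x y z => ?_⟩
  · by_contra hxy
    exact (hlt x y hxy).ne' h
  · rcases eq_or_ne x z with rfl | hxz
    · rw [hself]
      exact (hnn x y).trans (le_max_left _ _)
    · obtain ⟨X, hx, hz, h⟩ := exists_ukappa_eq κ hxz
      rw [h]
      by_cases hy : y ∈ X
      · exact (le_ukappa κ hy hz).trans (le_max_right _ _)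
      · exact (le_ukappa κ hx hy).trans (le_max_left _ _)
end

section
/- Let U be a finite set with at least two elements and let κ be a maximum-submodular connectivity function on U taking values in [0, 1) with κ(X) > 0 for all X with ∅ ≠ X ≠ U. Define u_κ : U × U → ℝ by u_κ(x, y) = max over X ⊆ U with x ∈ X and y ∉ X of −ln(κ(X)) for x ≠ y, and u_κ(x, x) = 0. Then the maximum linkage function of the metric space (U, u_κ) equals κ: for all X ⊆ U, mind_{u_κ}(X) = κ(X). -/
/-!
For distinct `x, y`, the number `exp (-u_κ (x, y))` is the minimum of `κ Z` over the sets `Z` that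
contain `x` but not `y`. Taking `Z = X` shows that the linkage of `X` is at most `κ X`. For the
converse, suppose that every `x ∈ X`, `y ∉ X` are separated by a set `Z x y` with
`κ (Z x y) < κ X`. The strict sublevel set `{Z | κ Z < κ X}` contains `∅` and `U` and is closed
under unions and intersections by maximum-submodularity, so it contains
`X = ⋃ x ∈ X, ⋂ y ∉ X, Z x y`, which is absurd. Hence some pair `x ∈ X`, `y ∉ X` has all its
separating sets at level at least `κ X` (`exists_pair_forall_le`).
-/

/-- If `0 < κ X`, some pair `x ∈ X`, `y ∉ X` is separated by no set of `κ`-value below `κ X`. The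
positivity puts `∅` and `U`, the values of the empty union and the empty intersection, into the
sublevel set `{Z | κ Z < κ X}`. -/
theorem exists_pair_forall_le {U : Type*} [Fintype U] [DecidableEq U]
    (κ : Finset U → ℝ)
    (hnorm : κ (∅ : Finset U) = 0)
    (hsym : ∀ X : Finset U, κ X = κ Xᶜ)
    (hmax : ∀ X Y : Finset U, max (κ (X ∩ Y)) (κ (X ∪ Y)) ≤ max (κ X) (κ Y))
    (X : Finset U) (hX : 0 < κ X) :
    ∃ x ∈ X, ∃ y ∉ X, ∀ Z : Finset U, x ∈ Z → y ∉ Z → κ X ≤ κ Z := by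
  by_contra! hcon
  have hcon' : ∀ x y, ∃ Z : Finset U, x ∈ X → y ∉ X → x ∈ Z ∧ y ∉ Z ∧ κ Z < κ X := by
    intro x y
    by_cases h : x ∈ X ∧ y ∉ X
    · obtain ⟨Z, hZ⟩ := hcon x h.1 y h.2
      exact ⟨Z, fun _ _ => hZ⟩
    · exact ⟨∅, fun hx hy => absurd ⟨hx, hy⟩ h⟩
  choose Z hZ using hcon'
  have huniv : κ (Finset.univ : Finset U) = 0 := by
    rw [hsym, Finset.compl_univ, hnorm]
  have hXeq : X = X.sup fun x => Xᶜ.inf fun y => Z x y := by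
    ext w
    simp only [Finset.mem_sup, Finset.mem_inf, Finset.mem_compl]
    refine ⟨fun hw => ⟨w, hw, fun y hy => (hZ w y hw hy).1⟩, ?_⟩
    rintro ⟨x, hx, h⟩
    by_contra hw
    exact (hZ x w hx hw).2.1 (h w hw)
  have hlt : κ (X.sup fun x => Xᶜ.inf fun y => Z x y) < κ X := by
    refine Finset.sup_induction (p := fun W => κ W < κ X) ?_ ?_ ?_
    · simpa [hnorm] using hX
    · intro A hA B hB
      exact (le_max_right _ _).trans_lt ((hmax A B).trans_lt (max_lt hA hB))
    · intro x hx
      refine Finset.inf_induction (p := fun W => κ W < κ X) ?_ ?_ ?_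
      · simpa [huniv] using hX
      · intro A hA B hB
        exact (le_max_left _ _).trans_lt ((hmax A B).trans_lt (max_lt hA hB))
      · intro y hy
        exact (hZ x y hx (Finset.mem_compl.mp hy)).2.2
  rw [← hXeq] at hlt
  exact lt_irrefl _ hlt


/-- For a maximum-submodular connectivity function `κ` with values in `[0, 1)` that is
strictly positive on nontrivial sets, the maximum linkage function of the (ultra)metric
`u_κ` equals `κ`. -/
theorem mind_ukappa_eq_kappa {U : Type*} [Fintype U] [DecidableEq U]
    (κ : Finset U → ℝ)
    (hnorm : κ (∅ : Finset U) = 0)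
    (hsym : ∀ X : Finset U, κ X = κ Xᶜ)
    (hmax : ∀ X Y : Finset U, max (κ (X ∩ Y)) (κ (X ∪ Y)) ≤ max (κ X) (κ Y))
    (hrange : ∀ X : Finset U, 0 ≤ κ X ∧ κ X < 1)
    (hpos : ∀ X : Finset U, X ≠ ∅ → X ≠ Finset.univ → 0 < κ X)
    (hcard : 1 < Fintype.card U) :
    ∀ X : Finset U, mindOf (ukappa κ) X = κ X := by
  intro X
  unfold mindOf
  split_ifs with h
  · have hne : X ≠ ∅ := h.1.ne_empty
    have hnu : X ≠ Finset.univ := by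
      rintro rfl
      simp at h
    have hX := hpos X hne hnu
    apply le_antisymm
    · refine Finset.sup'_le _ _ ?_
      rintro ⟨x, y⟩ hp
      obtain ⟨hx, hy⟩ := Finset.mem_product.mp hp
      have hy : y ∉ X := Finset.mem_compl.mp hy
      have hxy : x ≠ y := by
        rintro rfl
        exact hy hx
      have hle : -Real.log (κ X) ≤ ukappa κ x y := by
        rw [ukappa, dif_neg hxy]
        exact Finset.le_sup' (fun Z => -Real.log (κ Z)) (by simp [hx, hy])
      rw [← Real.le_log_iff_exp_le hX]
      exact neg_le.mp hle
    · obtain ⟨x, hx, y, hy, hmin⟩ := exists_pair_forall_le κ hnorm hsym hmax X hX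
      have hxy : x ≠ y := by
        rintro rfl
        exact hy hx
      have hle : ukappa κ x y ≤ -Real.log (κ X) := by
        rw [ukappa, dif_neg hxy]
        refine Finset.sup'_le _ _ fun Z hZ => ?_
        obtain ⟨hxZ, hyZ⟩ := (Finset.mem_filter.mp hZ).2
        exact neg_le_neg (Real.log_le_log hX (hmin Z hxZ hyZ))
      refine le_trans ?_ (Finset.le_sup' (fun p : U × U => Real.exp (-ukappa κ p.1 p.2))
        (Finset.mk_mem_product hx (Finset.mem_compl.mpr hy)))
      rw [← Real.log_le_iff_le_exp hX]
      exact le_neg.mp hle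
  · rcases X.eq_empty_or_nonempty with rfl | hne
    · exact hnorm.symm
    · have hc : Xᶜ = ∅ := Finset.not_nonempty_iff_eq_empty.mp fun hc => h ⟨hne, hc⟩
      rw [hsym, hc, hnorm]
end

section
/- Let θ be a dendogram over a finite set U. Define u : U × U → ℝ by u(x, y) = min{r ≥ 0 : x and y lie in the same block of θ(r)}. Then u is an ultrametric on U, and for every r ≥ 0 and all x, y ∈ U, x and y lie in the same block of θ(r) if and only if u(x, y) ≤ r. -/
namespace Dendogram

variable {U : Type*} [Fintype U] [DecidableEq U] (D : Dendogram U)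

/-- `x` and `y` lie in a common block of `θ r`. -/
def SameBlock (r : ℝ) (x y : U) : Prop := ∃ B ∈ D.θ r, x ∈ B ∧ y ∈ B

variable {D}

theorem SameBlock.mono {r s : ℝ} {x y : U} (h : D.SameBlock r x y) (hr : 0 ≤ r) (hrs : r ≤ s) :
    D.SameBlock s x y := by
  obtain ⟨B, hB, hx, hy⟩ := h
  obtain ⟨B', hB', hsub⟩ := D.refines r s hr hrs B hB
  exact ⟨B', hB', hsub hx, hsub hy⟩

theorem SameBlock.symm {r : ℝ} {x y : U} (h : D.SameBlock r x y) : D.SameBlock r y x := by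
  obtain ⟨B, hB, hx, hy⟩ := h
  exact ⟨B, hB, hy, hx⟩

theorem SameBlock.trans {r : ℝ} {x y z : U} (hr : 0 ≤ r) (h : D.SameBlock r x y)
    (h' : D.SameBlock r y z) : D.SameBlock r x z := by
  obtain ⟨B, hB, hx, hy⟩ := h
  obtain ⟨B', hB', hy', hz⟩ := h'
  obtain rfl : B = B' := ((D.partition r hr).2 y).unique ⟨hB, hy⟩ ⟨hB', hy'⟩
  exact ⟨B, hB, hx, hz⟩

theorem sameBlock_zero {x y : U} : D.SameBlock 0 x y ↔ x = y := by
  simp only [SameBlock, D.init, Set.mem_setOf_eq]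
  constructor
  · rintro ⟨_, ⟨a, rfl⟩, hx, hy⟩
    rw [Finset.mem_singleton.1 hx, Finset.mem_singleton.1 hy]
  · rintro rfl
    exact ⟨{x}, ⟨x, rfl⟩, by simp, by simp⟩

variable (D)

/-- The infimum defining `u x y` is attained, so it is compared with `r` by looking at `θ r`. -/
theorem sameBlock_iff {r : ℝ} (hr : 0 ≤ r) (x y : U) :
    D.SameBlock r x y ↔ sInf {r : ℝ | 0 ≤ r ∧ D.SameBlock r x y} ≤ r := by
  set S : Set ℝ := {r : ℝ | 0 ≤ r ∧ D.SameBlock r x y}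
  have hbdd : BddBelow S := ⟨0, fun _ h => h.1⟩
  have hne : S.Nonempty := by
    obtain ⟨t₀, h0, ht⟩ := D.eventually
    exact ⟨t₀, h0, Finset.univ, by simp [ht t₀ le_rfl], by simp, by simp⟩
  have h0 : 0 ≤ sInf S := le_csInf hne fun _ h => h.1
  have hmem : D.SameBlock (sInf S) x y := by
    obtain ⟨ε, hε, hconst⟩ := D.rightCont _ h0
    obtain ⟨t, htS, htlt⟩ := exists_lt_of_csInf_lt hne (lt_add_of_pos_right (sInf S) hε)
    have h := htS.2
    rwa [SameBlock, hconst t (csInf_le hbdd htS) htlt.le] at h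
  exact ⟨fun h => csInf_le hbdd ⟨hr, h⟩, fun h => hmem.mono h0 h⟩

end Dendogram

/-- The function `u (x, y) = min { r ≥ 0 : x, y lie in the same block of θ(r) }` attached
to a dendogram `θ` is an ultrametric, and `x, y` lie in the same block of `θ(r)` iff
`u (x, y) ≤ r`. -/
theorem dendogram_ultrametric {U : Type*} [Fintype U] [DecidableEq U] [Nonempty U]
    (D : Dendogram U) (u : U → U → ℝ)
    (hu : ∀ x y : U,
      u x y = sInf {r : ℝ | 0 ≤ r ∧ ∃ B ∈ D.θ r, x ∈ B ∧ y ∈ B}) :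
    (∀ x y : U, 0 ≤ u x y) ∧
    (∀ x y : U, u x y = 0 ↔ x = y) ∧
    (∀ x y : U, u x y = u y x) ∧
    (∀ x y z : U, u x z ≤ max (u x y) (u y z)) ∧
    (∀ r : ℝ, 0 ≤ r → ∀ x y : U, (∃ B ∈ D.θ r, x ∈ B ∧ y ∈ B) ↔ u x y ≤ r) := by
  have key : ∀ r : ℝ, 0 ≤ r → ∀ x y : U, D.SameBlock r x y ↔ u x y ≤ r := fun r hr x y => by
    rw [hu]
    exact D.sameBlock_iff hr x y
  have hnn : ∀ x y : U, 0 ≤ u x y := fun x y => by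
    rw [hu]
    exact Real.sInf_nonneg fun _ h => h.1
  have hsymm : ∀ x y : U, u x y ≤ u y x := fun x y =>
    (key _ (hnn y x) x y).1 ((key _ (hnn y x) y x).2 le_rfl).symm
  refine ⟨hnn, fun x y => ?_, fun x y => (hsymm x y).antisymm (hsymm y x), fun x y z => ?_, key⟩
  · rw [← D.sameBlock_zero, key 0 le_rfl]
    exact ⟨le_of_eq, fun h => h.antisymm (hnn x y)⟩
  · have hmax : 0 ≤ max (u x y) (u y z) := le_max_of_le_left (hnn x y)
    exact (key _ hmax x z).1 <| ((key _ hmax x y).2 (le_max_left _ _)).trans hmax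
      ((key _ hmax y z).2 (le_max_right _ _))
end
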